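/- Let A₁, A₂ be finite subsets of ℂ, let Π ⊆ A₁×A₂, and let Γ be a finite multiset of algebraic curves in ℂ² of degree at most δ such that the system (Π,Γ) has (λ,μ)-bounded multiplicity. Then I(Π,Γ) ≤ c·(|A₁|^{2/3}|A₂|^{2/3}|Γ|^{2/3} + |A₁||A₂| + |Γ|), where c is a constant depending only (polynomially) on δ, λ and μ, and I(Π,Γ) denotes the number of incidences counted with multiplicity. -/

import Mathlib

open MvPolynomial

noncomputable section

attribute [local instance] Classical.propDecidable

def ev2 (g : MvPolynomial (Fin 2) ℂ) (p : ℂ × ℂ) : ℂ := eval ![p.1, p.2] g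

/-- The system `(Π,Γ)` has `(λ,μ)`-bounded multiplicity:
(a) for each curve `γ ∈ Γ` there are at most `lam` other curves of `Γ` (with multiplicity)
meeting `γ` in more than `mu` points;
(b) for each point `p ∈ Π` there are at most `lam` other points of `Π` lying together with
`p` on more than `mu` curves of `Γ` (with multiplicity). -/
def BddMult (Pi : Finset (ℂ × ℂ)) (Γ : Multiset (Set (ℂ × ℂ))) (lam mu : ℕ) : Prop :=
  (∀ γ ∈ Γ, Multiset.card ((Γ.erase γ).filter fun γ' =>
      (γ ∩ γ' : Set (ℂ × ℂ)).Infinite ∨ mu < (γ ∩ γ' : Set (ℂ × ℂ)).ncard) ≤ lam) ∧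
  (∀ p ∈ Pi, ((Pi.erase p).filter fun p' =>
      mu < Multiset.card (Γ.filter fun γ => p ∈ γ ∧ p' ∈ γ)).card ≤ lam)

/-- The number of incidences between the point set `Π` and the multiset of curves `Γ`,
counted with the multiplicity of the curves. -/
def incidences (Pi : Finset (ℂ × ℂ)) (Γ : Multiset (Set (ℂ × ℂ))) : ℕ :=
  (Γ.map fun γ => (Pi.filter fun p => p ∈ γ).card).sum

/-
A greedy colouring splits the points into `λ + 1` classes on each of which any two points lie on at
most `μ` common curves. For such a class, partition `A₁` and `A₂` into `O(κ)` discs, always carving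
off a smallest disc with about `|Aᵢ| / κ` points. Few pairs of points of `A₁ × A₂` are then close in
both coordinates, on the scale of their discs, so all but few incidences of a curve are with points
that are pairwise far apart on this scale. Over `ℂ` there is no order in which to count these along
the curve. Instead, off few points the curve is locally a graph over one of the axes, of a function
that is either nearly affine or comparable to a monomial on the relevant discs; separated points on
such a graph are charged to cells, giving `O(κ)` points per curve. The bound follows from the
choice `κ³ |Γ| = (|A₁| |A₂|)²`.
-/

section NearlyConstant

open Metric

lemma norm_image_sub_sub_mul_le {𝕜 : Type*} [RCLike 𝕜] {f f' : 𝕜 → 𝕜} {s : Set 𝕜}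
    (hs : Convex ℝ s) {a : 𝕜} {b : ℝ} (hf : ∀ x ∈ s, HasDerivWithinAt f (f' x) s x)
    (hb : ∀ x ∈ s, ‖f' x - a‖ ≤ b) {x y : 𝕜} (hx : x ∈ s) (hy : y ∈ s) :
    ‖f y - f x - a * (y - x)‖ ≤ b * ‖y - x‖ := by
  have h := hs.norm_image_sub_le_of_norm_hasDerivWithin_le (f := fun z ↦ f z - a * z)
    (fun z hz ↦ (hf z hz).sub ((hasDerivWithinAt_id z s).const_mul a)) (by simpa using hb) hx hy
  rwa [show f y - f x - a * (y - x) = f y - a * y - (f x - a * x) by ring]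

variable {f g : ℂ → ℂ} {a c : ℂ} {r R : ℝ}

section DerivCloseToConstant

variable (hf : DifferentiableOn ℂ f (ball c r)) (ha : ∀ x ∈ ball c r, ‖deriv f x - a‖ ≤ ‖a‖ / 2)

include hf ha

lemma norm_image_sub_sub_mul_le_of_deriv_close {x y : ℂ} (hx : x ∈ ball c r)
    (hy : y ∈ ball c r) : ‖f y - f x - a * (y - x)‖ ≤ ‖a‖ / 2 * ‖y - x‖ :=
  norm_image_sub_sub_mul_le (convex_ball c r)
    (fun _ hz ↦ (hf.differentiableAt (isOpen_ball.mem_nhds hz)).hasDerivAt.hasDerivWithinAt)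
    ha hx hy

lemma norm_image_sub_le_of_deriv_close {x y : ℂ} (hx : x ∈ ball c r) (hy : y ∈ ball c r) :
    ‖f y - f x‖ ≤ 3 / 2 * ‖a‖ * ‖y - x‖ := by
  have h := norm_image_sub_sub_mul_le_of_deriv_close hf ha hx hy
  have := norm_le_norm_add_norm_sub' (f y - f x) (a * (y - x))
  rw [norm_mul] at this
  linarith

lemma le_norm_image_sub_of_deriv_close {x y : ℂ} (hx : x ∈ ball c r) (hy : y ∈ ball c r) :
    ‖a‖ / 2 * ‖y - x‖ ≤ ‖f y - f x‖ := by
  have h := norm_image_sub_sub_mul_le_of_deriv_close hf ha hx hy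
  have := norm_le_norm_add_norm_sub (f y - f x) (a * (y - x))
  rw [norm_mul] at this
  linarith

lemma injOn_of_deriv_close (ha₀ : a ≠ 0) : Set.InjOn f (ball c r) := by
  intro x hx y hy hxy
  have h := le_norm_image_sub_of_deriv_close hf ha hx hy
  rw [hxy, sub_self, norm_zero] at h
  have : ‖y - x‖ ≤ 0 := nonpos_of_mul_nonpos_right h (by positivity)
  exact (sub_eq_zero.1 (norm_le_zero_iff.1 this)).symm

lemma ball_subset_image_ball_of_deriv_close (ha₀ : a ≠ 0) (hr : 0 < r) :
    ball (f c) (‖a‖ * r / 8) ⊆ f '' ball c r := by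
  have hsub : closedBall c (r / 2) ⊆ ball c r := closedBall_subset_ball (by linarith)
  have hsphere : ∀ z ∈ sphere c (r / 2), ‖a‖ * r / 4 ≤ ‖f z - f c‖ := by
    intro z hz
    convert le_norm_image_sub_of_deriv_close hf ha (mem_ball_self hr)
      (hsub (sphere_subset_closedBall hz)) using 1
    rw [mem_sphere_iff_norm.1 hz]
    ring
  have hne : ∃ᶠ z in nhds c, f z ≠ f c := by
    refine Filter.Eventually.frequently (f := nhdsWithin c {c}ᶜ) ?_ |>.filter_mono
      nhdsWithin_le_nhds
    filter_upwards [self_mem_nhdsWithin, mem_nhdsWithin_of_mem_nhds (ball_mem_nhds c hr)]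
      with z hzc hz
    exact (injOn_of_deriv_close hf ha ha₀).ne hz (mem_ball_self hr) hzc
  have h := DiffContOnCl.ball_subset_image_closedBall
    ((hf.mono hsub).diffContOnCl_ball subset_rfl) (half_pos hr) hsphere hne
  rw [show ‖a‖ * r / 8 = ‖a‖ * r / 4 / 2 by ring]
  exact h.trans (Set.image_mono hsub)

end DerivCloseToConstant

/- Landau's trick: take `x₀` maximising `‖g x‖ * (R / 2 - dist x c)`. Then `‖g‖ ≤ 2 * ‖g x₀‖` on
a disc around `x₀`, and the Schwarz lemma makes `g` nearly constant on a smaller disc. -/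
lemma exists_ball_nearly_constant (hR : 0 < R) (hg : DifferentiableOn ℂ g (ball c R))
    (hgc : g c ≠ 0) : ∃ x₀ r, 0 < r ∧ g x₀ ≠ 0 ∧ ball x₀ r ⊆ ball c R ∧
      (∀ x ∈ ball x₀ r, ‖g x - g x₀‖ ≤ ‖g x₀‖ / 2) ∧ ‖g c‖ * R ≤ 24 * (‖g x₀‖ * r) := by
  have hsub : closedBall c (R / 2) ⊆ ball c R := closedBall_subset_ball (by linarith)
  have hcmem : c ∈ closedBall c (R / 2) := mem_closedBall_self (by positivity)
  obtain ⟨x₀, -, hmax⟩ := (isCompact_closedBall c (R / 2)).exists_isMaxOn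
    (f := fun x ↦ ‖g x‖ * (R / 2 - dist x c)) ⟨c, hcmem⟩
    ((hg.continuousOn.mono hsub).norm.mul (by fun_prop))
  have hc : ‖g c‖ * (R / 2) ≤ ‖g x₀‖ * (R / 2 - dist x₀ c) := by simpa using hmax hcmem
  have hpos : 0 < ‖g x₀‖ * (R / 2 - dist x₀ c) := lt_of_lt_of_le (by positivity) hc
  obtain ⟨t, ht⟩ : ∃ t, R / 2 - dist x₀ c = 2 * t := ⟨(R / 2 - dist x₀ c) / 2, by ring⟩
  rw [ht] at hc hpos
  have ht₀ : 0 < t := by linarith [pos_of_mul_pos_right hpos (norm_nonneg _)]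
  have hball : ball x₀ t ⊆ ball c R := ball_subset_ball' (by linarith)
  have hle : ∀ x ∈ ball x₀ t, ‖g x‖ ≤ 2 * ‖g x₀‖ := by
    intro x hx
    have hdist : t ≤ R / 2 - dist x c := by linarith [dist_triangle x x₀ c, mem_ball.1 hx]
    have hx_max : ‖g x‖ * (R / 2 - dist x c) ≤ ‖g x₀‖ * (R / 2 - dist x₀ c) :=
      hmax (show x ∈ closedBall c (R / 2) by rw [mem_closedBall]; linarith)
    refine le_of_mul_le_mul_right ?_ ht₀
    calc ‖g x‖ * t ≤ ‖g x‖ * (R / 2 - dist x c) := by gcongr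
      _ ≤ 2 * ‖g x₀‖ * t := by rw [ht] at hx_max; linarith
  have hmaps : Set.MapsTo g (ball x₀ t) (closedBall (g x₀) (3 * ‖g x₀‖)) := by
    intro x hx
    rw [mem_closedBall_iff_norm]
    linarith [norm_sub_le (g x) (g x₀), hle x hx]
  refine ⟨x₀, t / 6, by positivity, norm_pos_iff.1 (pos_of_mul_pos_left hpos (by positivity)),
    (ball_subset_ball (by linarith)).trans hball, fun x hx ↦ ?_, by linarith⟩
  calc ‖g x - g x₀‖ ≤ 3 * ‖g x₀‖ / t * dist x x₀ := by
        rw [← dist_eq_norm]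
        exact Complex.dist_le_div_mul_dist_of_mapsTo_ball (hg.mono hball) hmaps
          (ball_subset_ball (by linarith) hx)
    _ ≤ 3 * ‖g x₀‖ / t * (t / 6) := by gcongr; exact (mem_ball.1 hx).le
    _ = ‖g x₀‖ / 2 := by field_simp; ring

theorem exists_ball_subset_image (hR : 0 < R) (hf : DifferentiableOn ℂ f (ball c R)) :
    ∃ w, ball w (‖deriv f c‖ * R / 192) ⊆ f '' ball c R := by
  rcases eq_or_ne (deriv f c) 0 with h₀ | h₀
  · exact ⟨0, by simp [h₀]⟩
  obtain ⟨x₀, r, hr, hx₀, hsub, hclose, hle⟩ :=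
    exists_ball_nearly_constant hR (hf.deriv isOpen_ball) h₀
  exact ⟨f x₀, (ball_subset_ball (by linarith)).trans <|
    (ball_subset_image_ball_of_deriv_close (hf.mono hsub) hclose hx₀ hr).trans <|
      Set.image_mono hsub⟩

lemma exists_eq_exp_mul (hR : 0 < R) (hg : DifferentiableOn ℂ g (ball c R))
    (hg₀ : ∀ x ∈ ball c R, g x ≠ 0) : ∃ u : ℂ → ℂ, u c = 0 ∧ DifferentiableOn ℂ u (ball c R) ∧
      ∀ x ∈ ball c R, g x = Complex.exp (u x) * g c := by
  obtain ⟨u, huc, hu⟩ :=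
    ((hg.deriv isOpen_ball).div hg hg₀).isExactOn_ball.with_val_at c 0
  have hud : DifferentiableOn ℂ u (ball c R) :=
    fun x hx ↦ (hu x hx).differentiableAt.differentiableWithinAt
  refine ⟨u, huc, hud, fun x hx ↦ ?_⟩
  have hderiv : ∀ y ∈ ball c R, HasDerivAt (fun x ↦ Complex.exp (-u x) * g x) 0 y := by
    intro y hy
    have hgy := (hg.differentiableAt (isOpen_ball.mem_nhds hy)).hasDerivAt
    refine ((hu y hy).neg.cexp.mul hgy).congr_deriv ?_
    have := hg₀ y hy
    simp only [Pi.div_apply]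
    field_simp
    ring
  have hconst : Complex.exp (-u x) * g x = Complex.exp (-u c) * g c :=
    isOpen_ball.is_const_of_deriv_eq_zero (convex_ball c R).isPreconnected
      (hud.neg.cexp.mul hg) (fun y hy ↦ (hderiv y hy).deriv) hx (mem_ball_self hR)
  rw [huc, neg_zero, Complex.exp_zero, one_mul] at hconst
  rw [← hconst, ← mul_assoc, ← Complex.exp_add, add_neg_cancel, Complex.exp_zero, one_mul]

/- Otherwise `u` covers a disc containing `N + 1` points in a row with spacing `2πi`, all with the
same exponential. -/
lemma norm_deriv_le_of_encard_exp_eq_le {u : ℂ → ℂ} {N : ℕ} (hR : 0 < R)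
    (hu : DifferentiableOn ℂ u (ball c R))
    (hN : ∀ v, {x ∈ ball c R | Complex.exp (u x) = v}.encard ≤ N) :
    ‖deriv u c‖ * R ≤ 192 * (2 * Real.pi * (N + 1)) := by
  by_contra! hlt
  obtain ⟨w, hw⟩ := exists_ball_subset_image hR hu
  have hmem : ∀ k : Fin (N + 1), ∃ y ∈ ball c R, u y = w + (k : ℕ) * (2 * Real.pi * Complex.I) := by
    intro k
    refine hw (mem_ball_iff_norm.2 ?_)
    have hk : ((k : ℕ) : ℝ) ≤ N + 1 := by exact_mod_cast k.is_lt.le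
    calc ‖w + (k : ℕ) * (2 * Real.pi * Complex.I) - w‖ = (k : ℕ) * (2 * Real.pi) := by
          simp [abs_of_pos Real.pi_pos]
      _ ≤ (N + 1) * (2 * Real.pi) := by gcongr
      _ < ‖deriv u c‖ * R / 192 := by linarith
  choose y hy huy using hmem
  have hinj : Function.Injective y := by
    intro i j hij
    have h := huy i
    rw [hij, huy j] at h
    have := mul_right_cancel₀ Complex.two_pi_I_ne_zero (add_left_cancel h)
    exact Fin.ext (by exact_mod_cast this.symm)
  have hrange : Set.range y ⊆ {x ∈ ball c R | Complex.exp (u x) = Complex.exp w} := by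
    rintro _ ⟨k, rfl⟩
    exact ⟨hy k, by rw [huy, Complex.exp_add, Complex.exp_nat_mul_two_pi_mul_I, mul_one]⟩
  have hcard := (Set.encard_le_encard hrange).trans (hN _)
  rw [← Set.image_univ, hinj.encard_image, Set.encard_univ, ENat.card_eq_coe_fintype_card,
    Fintype.card_fin] at hcard
  exact N.not_succ_le_self (by exact_mod_cast hcard)

theorem exists_nearly_constant (N : ℕ) : ∃ κ : ℝ, 0 < κ ∧ κ ≤ 1 ∧ ∀ (g : ℂ → ℂ) (c : ℂ) (R : ℝ),
    0 < R → DifferentiableOn ℂ g (ball c R) → (∀ x ∈ ball c R, g x ≠ 0) →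
    (∀ v, {x ∈ ball c R | g x = v}.encard ≤ N) →
    ∀ x ∈ ball c (κ * R), ‖g x - g c‖ ≤ ‖g c‖ / 2 := by
  set L : ℝ := 2 * (192 * (2 * Real.pi * (N + 1)))
  have hL : 1 ≤ L := by
    have : Real.pi * 1 ≤ Real.pi * (N + 1) := by gcongr; simp
    simp only [L]
    linarith [Real.pi_gt_three]
  refine ⟨1 / (4 * L), by positivity, by rw [div_le_one (by positivity)]; linarith,
    fun g c R hR hg hg₀ hN x hx ↦ ?_⟩
  obtain ⟨u, huc, hu, hexp⟩ := exists_eq_exp_mul hR hg hg₀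
  have hderiv : ∀ y ∈ ball c (R / 2), ‖deriv u y - 0‖ ≤ L / R := by
    intro y hy
    have hsub : ball y (R / 2) ⊆ ball c R := ball_subset_ball' (by linarith [mem_ball.1 hy])
    have := norm_deriv_le_of_encard_exp_eq_le (N := N) (half_pos hR) (hu.mono hsub) fun v ↦
      (Set.encard_le_encard (t := {x ∈ ball c R | g x = v * g c}) fun z hz ↦
        ⟨hsub hz.1, by rw [hexp z (hsub hz.1), hz.2]⟩).trans (hN _)
    rw [sub_zero, le_div_iff₀ hR]
    simp only [L]
    linarith
  have hκ : 1 / (4 * L) * R ≤ R / 2 := by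
    rw [div_mul_eq_mul_div, one_mul]
    exact div_le_div_of_nonneg_left hR.le (by norm_num) (by linarith)
  have hhalf : ball c (R / 2) ⊆ ball c R := ball_subset_ball (by linarith)
  have hx' : x ∈ ball c (R / 2) := ball_subset_ball hκ hx
  have hux : ‖u x‖ ≤ 1 / 4 := by
    have h := norm_image_sub_sub_mul_le (convex_ball c (R / 2)) (fun z hz ↦ (hu.differentiableAt
      (isOpen_ball.mem_nhds (hhalf hz))).hasDerivAt.hasDerivWithinAt) hderiv
      (mem_ball_self (half_pos hR)) hx'
    rw [huc, sub_zero, zero_mul, sub_zero] at h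
    calc ‖u x‖ ≤ L / R * ‖x - c‖ := h
      _ ≤ L / R * (1 / (4 * L) * R) := by gcongr; exact (mem_ball_iff_norm.1 hx).le
      _ = 1 / 4 := by field_simp
  calc ‖g x - g c‖ = ‖Complex.exp (u x) - 1‖ * ‖g c‖ := by
        rw [hexp x (hhalf hx'), ← norm_mul, sub_mul, one_mul]
    _ ≤ 2 * ‖u x‖ * ‖g c‖ := by gcongr; exact Complex.norm_exp_sub_one_le (by linarith)
    _ ≤ ‖g c‖ / 2 := by nlinarith [norm_nonneg (g c)]

end NearlyConstant

section Bivariate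

open Polynomial (derivative)
open Polynomial.Bivariate (swap)
open scoped Polynomial Polynomial.Bivariate

section CommSemiring

variable {R : Type*} [CommSemiring R]

lemma coeff_coeff_swap (P : R[X][Y]) (i j : ℕ) :
    ((swap P).coeff i).coeff j = (P.coeff j).coeff i := by
  induction P using Polynomial.induction_on' with
  | add p q hp hq => simp only [map_add, Polynomial.coeff_add, hp, hq]
  | monomial n a =>
    induction a using Polynomial.induction_on' with
    | add p q hp hq => simp only [map_add, Polynomial.coeff_add, hp, hq]
    | monomial m c =>
      rw [Polynomial.Bivariate.swap_monomial_monomial]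
      simp only [Polynomial.coeff_monomial]
      split_ifs <;> simp_all [Polynomial.coeff_monomial]

lemma natDegree_swap_le_iff {P : R[X][Y]} {d : ℕ} :
    (swap P).natDegree ≤ d ↔ ∀ i, (P.coeff i).natDegree ≤ d := by
  simp only [Polynomial.natDegree_le_iff_coeff_eq_zero, Polynomial.ext_iff, coeff_coeff_swap,
    Polynomial.coeff_zero]
  exact ⟨fun h i j hj ↦ h j hj i, fun h j hj i ↦ h i j hj⟩

variable (R) in
/-- The bivariate polynomials whose degree in each of the two variables is at most `d`. -/
def bidegreeLE (d : ℕ) : Submodule R R[X][Y] where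
  carrier := {P | P.natDegree ≤ d ∧ (swap P).natDegree ≤ d}
  zero_mem' := by simp
  add_mem' := by
    intro P Q hP hQ
    refine ⟨Polynomial.natDegree_add_le_of_degree_le hP.1 hQ.1, ?_⟩
    rw [map_add]
    exact Polynomial.natDegree_add_le_of_degree_le hP.2 hQ.2
  smul_mem' := by
    intro c P hP
    refine ⟨(Polynomial.natDegree_smul_le c P).trans hP.1, ?_⟩
    rw [map_smul]
    exact (Polynomial.natDegree_smul_le c _).trans hP.2

variable {P : R[X][Y]} {d : ℕ}

lemma mem_bidegreeLE : P ∈ bidegreeLE R d ↔ P.natDegree ≤ d ∧ (swap P).natDegree ≤ d :=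
  Iff.rfl

lemma monomial_monomial_mem_bidegreeLE {i j : ℕ} (hi : i ≤ d) (hj : j ≤ d) (c : R) :
    Polynomial.monomial i (Polynomial.monomial j c) ∈ bidegreeLE R d := by
  rw [mem_bidegreeLE, Polynomial.Bivariate.swap_monomial_monomial]
  exact ⟨(Polynomial.natDegree_monomial_le _).trans hi,
    (Polynomial.natDegree_monomial_le _).trans hj⟩

lemma natDegree_coeff_le_of_mem_bidegreeLE (hP : P ∈ bidegreeLE R d) (i : ℕ) :
    (P.coeff i).natDegree ≤ d :=
  natDegree_swap_le_iff.1 hP.2 i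

lemma swap_mem_bidegreeLE (hP : P ∈ bidegreeLE R d) : swap P ∈ bidegreeLE R d :=
  ⟨hP.2, by rw [Polynomial.Bivariate.swap_swap_apply]; exact hP.1⟩

lemma derivative_mem_bidegreeLE (hP : P ∈ bidegreeLE R d) : derivative P ∈ bidegreeLE R d := by
  refine ⟨(Polynomial.natDegree_derivative_le P).trans ((Nat.sub_le _ _).trans hP.1),
    natDegree_swap_le_iff.2 fun i ↦ ?_⟩
  rw [Polynomial.coeff_derivative, ← Nat.cast_succ, ← Polynomial.C_eq_natCast]
  exact (Polynomial.natDegree_mul_C_le _ _).trans (natDegree_coeff_le_of_mem_bidegreeLE hP _)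

/-- The partial derivative of a bivariate polynomial in its first (inner) variable; the partial
derivative in the second variable is `Polynomial.derivative`. -/
def derivativeX (P : R[X][Y]) : R[X][Y] := swap (derivative (swap P))

lemma derivativeX_add (P Q : R[X][Y]) :
    derivativeX (P + Q) = derivativeX P + derivativeX Q := by
  simp only [derivativeX, map_add]

lemma derivativeX_monomial (n : ℕ) (a : R[X]) :
    derivativeX (Polynomial.monomial n a) = Polynomial.monomial n (derivative a) := by
  induction a using Polynomial.induction_on' with
  | add p q hp hq => rw [map_add, derivativeX_add, hp, hq, map_add, map_add]
  | monomial m c =>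
    rw [derivativeX, Polynomial.Bivariate.swap_monomial_monomial, Polynomial.derivative_monomial,
      Polynomial.derivative_monomial, ← Polynomial.C_eq_natCast, Polynomial.monomial_mul_C,
      Polynomial.Bivariate.swap_monomial_monomial]

lemma derivativeX_mem_bidegreeLE (hP : P ∈ bidegreeLE R d) : derivativeX P ∈ bidegreeLE R d :=
  swap_mem_bidegreeLE (derivative_mem_bidegreeLE (swap_mem_bidegreeLE hP))

lemma evalEval_monomial (n : ℕ) (a : R[X]) (x y : R) :
    (Polynomial.monomial n a).evalEval x y = a.eval x * y ^ n := by
  simp only [Polynomial.evalEval, Polynomial.eval_monomial, Polynomial.eval_mul,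
    Polynomial.eval_pow, Polynomial.eval_C]

lemma evalEval_swap (P : R[X][Y]) (x y : R) : (swap P).evalEval x y = P.evalEval y x := by
  simpa only [Polynomial.coe_aevalAeval_eq_evalEval] using
    Polynomial.Bivariate.aevalAeval_swap (R := R) x y P

lemma evalEval_derivative_swap (P : R[X][Y]) (x y : R) :
    (derivative (swap P)).evalEval x y = (derivativeX P).evalEval y x := by
  rw [derivativeX, evalEval_swap]

end CommSemiring

section Resultant

lemma resultant_ne_zero_of_irreducible {R : Type*} [CommRing R] [IsDomain R]
    [NormalizedGCDMonoid R] {P H : R[X]} (hP : Irreducible P) (hdeg : P.natDegree ≠ 0)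
    (hPH : ¬ P ∣ H) : P.resultant H ≠ 0 := by
  intro h₀
  have hprim : P.IsPrimitive := hP.isPrimitive hdeg
  set φ := algebraMap R (FractionRing R)
  have hφ : Function.Injective φ := IsFractionRing.injective R (FractionRing R)
  have hmap : (P.map φ).resultant (H.map φ) = 0 := by
    rw [Polynomial.natDegree_map_eq_of_injective hφ, Polynomial.natDegree_map_eq_of_injective hφ,
      Polynomial.resultant_map_map, h₀, map_zero]
  have hirr : Irreducible (P.map φ) := hprim.irreducible_iff_irreducible_map_fraction_map.1 hP
  have hdvd : P.map φ ∣ H.map φ := by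
    by_contra h
    exact (Polynomial.resultant_eq_zero_iff.1 hmap).2 (hirr.coprime_iff_not_dvd.2 h)
  exact hPH (hprim.dvd_of_fraction_map_dvd_fraction_map hdvd)

lemma natDegree_resultant_le {R : Type*} [CommRing R] {P H : R[X][Y]} {d : ℕ}
    (hP : ∀ i, (P.coeff i).natDegree ≤ d) (hH : ∀ i, (H.coeff i).natDegree ≤ d) :
    (P.resultant H).natDegree ≤ (P.natDegree + H.natDegree) * d := by
  have hentry : ∀ i j, (P.sylvester H P.natDegree H.natDegree i j).natDegree ≤ d := by
    intro i j
    rw [Polynomial.sylvester, Matrix.of_apply]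
    cases j using Fin.addCases with
    | left j =>
      rw [Fin.addCases_left]
      split_ifs
      · exact hH _
      · simp
    | right j =>
      rw [Fin.addCases_right]
      split_ifs
      · exact hP _
      · simp
  rw [Polynomial.resultant, Matrix.det_apply]
  refine Polynomial.natDegree_sum_le_of_forall_le _ _ fun σ _ ↦
    (Polynomial.natDegree_smul_le _ _).trans ((Polynomial.natDegree_prod_le _ _).trans ?_)
  exact (Finset.sum_le_card_nsmul _ _ d fun i _ ↦ hentry _ _).trans_eq (by simp)

lemma eval_resultant_eq_zero {R : Type*} [CommRing R] {P H : R[X][Y]} (hdeg : P.natDegree ≠ 0)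
    {x y : R} (hP : P.evalEval x y = 0) (hH : H.evalEval x y = 0) :
    (P.resultant H).eval x = 0 := by
  obtain ⟨p, q, -, -, h⟩ :=
    Polynomial.exists_mul_add_mul_eq_C_resultant P H le_rfl le_rfl (Or.inl hdeg)
  simpa [hP, hH, Polynomial.evalEval_C] using (congrArg (Polynomial.evalEval x y) h).symm

lemma card_roots_resultant_le {R : Type*} [CommRing R] [IsDomain R] {P H : R[X][Y]} {d : ℕ}
    (hP : P ∈ bidegreeLE R d) (hH : H ∈ bidegreeLE R d) :
    (P.resultant H).roots.toFinset.card ≤ 2 * d * d :=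
  calc (P.resultant H).roots.toFinset.card ≤ (P.resultant H).natDegree :=
        (Multiset.toFinset_card_le _).trans (Polynomial.card_roots' _)
    _ ≤ (P.natDegree + H.natDegree) * d := natDegree_resultant_le
        (natDegree_coeff_le_of_mem_bidegreeLE hP) (natDegree_coeff_le_of_mem_bidegreeLE hH)
    _ ≤ 2 * d * d := by gcongr; linarith [hP.1, hH.1]

end Resultant

section RegularOver

/-- The vertical line over `x` is in general position with respect to the curve `P = 0`: the
leading coefficient of `P` does not vanish at `x`, and neither partial derivative of `P` vanishes
at a point of the curve over `x`. -/
def RegularOver {R : Type*} [CommSemiring R] (P : R[X][Y]) (x : R) : Prop :=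
  P.leadingCoeff.eval x ≠ 0 ∧ ∀ y, P.evalEval x y = 0 →
    (derivative P).evalEval x y ≠ 0 ∧ (derivativeX P).evalEval x y ≠ 0

variable {R : Type*} [CommRing R] [IsDomain R] [CharZero R]

lemma not_dvd_derivative {P : R[X]} (hdeg : P.natDegree ≠ 0) :
    ¬ P ∣ derivative P := by
  intro h
  have h₀ : derivative P ≠ 0 := fun h₀ ↦ hdeg (Polynomial.derivative_eq_zero.1 h₀)
  exact (Polynomial.natDegree_le_of_dvd h h₀).not_gt (Polynomial.natDegree_derivative_lt hdeg)

lemma not_dvd_derivativeX {P : R[X][Y]} (hdeg : (swap P).natDegree ≠ 0) : ¬ P ∣ derivativeX P := by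
  intro h
  have := map_dvd (swap (R := R)) h
  rw [derivativeX, Polynomial.Bivariate.swap_swap_apply] at this
  exact not_dvd_derivative hdeg this

lemma exists_finset_regularOver {K : Type*} [Field K] [CharZero K] {P : K[X][Y]} {d : ℕ}
    (hP : Irreducible P) (hdeg : P.natDegree ≠ 0) (hdeg' : (swap P).natDegree ≠ 0)
    (hPd : P ∈ bidegreeLE K d) :
    ∃ Z : Finset K, Z.card ≤ d + 4 * d * d ∧ ∀ x ∉ Z, RegularOver P x := by
  have hl₀ : P.leadingCoeff ≠ 0 := Polynomial.leadingCoeff_ne_zero.2 hP.ne_zero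
  have hr₀ := resultant_ne_zero_of_irreducible hP hdeg (not_dvd_derivative hdeg)
  have hq₀ := resultant_ne_zero_of_irreducible hP hdeg (not_dvd_derivativeX hdeg')
  refine ⟨P.leadingCoeff.roots.toFinset ∪ ((P.resultant (derivative P)).roots.toFinset ∪
    (P.resultant (derivativeX P)).roots.toFinset), ?_, fun x hx ↦ ?_⟩
  · have hl := (Multiset.toFinset_card_le P.leadingCoeff.roots).trans
      ((Polynomial.card_roots' _).trans (natDegree_coeff_le_of_mem_bidegreeLE hPd _))
    have hr := card_roots_resultant_le hPd (derivative_mem_bidegreeLE hPd)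
    have hq := card_roots_resultant_le hPd (derivativeX_mem_bidegreeLE hPd)
    grw [Finset.card_union_le, Finset.card_union_le, hl, hr, hq]
    linarith
  · simp only [Finset.mem_union, Multiset.mem_toFinset, Polynomial.mem_roots hl₀,
      Polynomial.mem_roots hr₀, Polynomial.mem_roots hq₀, Polynomial.IsRoot.def, not_or] at hx
    exact ⟨hx.1, fun y hy ↦ ⟨fun h ↦ hx.2.1 (eval_resultant_eq_zero hdeg hy h),
      fun h ↦ hx.2.2 (eval_resultant_eq_zero hdeg hy h)⟩⟩

end RegularOver

section Calculus

variable {𝕜 : Type*} [NontriviallyNormedField 𝕜]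

lemma hasStrictFDerivAt_evalEval (P : 𝕜[X][Y]) (p : 𝕜 × 𝕜) :
    HasStrictFDerivAt (fun q : 𝕜 × 𝕜 ↦ P.evalEval q.1 q.2)
      ((derivativeX P).evalEval p.1 p.2 • ContinuousLinearMap.fst 𝕜 𝕜 𝕜 +
        (derivative P).evalEval p.1 p.2 • ContinuousLinearMap.snd 𝕜 𝕜 𝕜) p := by
  induction P using Polynomial.induction_on' with
  | add P Q hP hQ =>
    simp only [derivativeX_add, map_add, Polynomial.evalEval_add]
    exact (hP.add hQ).congr_fderiv (by module)
  | monomial n a =>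
    simp only [derivativeX_monomial, Polynomial.derivative_monomial, evalEval_monomial,
      Polynomial.eval_mul, Polynomial.eval_natCast]
    refine (((a.hasStrictDerivAt p.1).comp_hasStrictFDerivAt p hasStrictFDerivAt_fst).mul
      (hasStrictFDerivAt_snd.pow n)).congr_fderiv ?_
    ext <;> simp <;> ring

lemma continuous_evalEval (P : 𝕜[X][Y]) : Continuous fun q : 𝕜 × 𝕜 ↦ P.evalEval q.1 q.2 :=
  continuous_iff_continuousAt.2 fun p ↦ (hasStrictFDerivAt_evalEval P p).continuousAt

lemma hasDerivAt_evalEval (P : 𝕜[X][Y]) {f : 𝕜 → 𝕜} {f' x : 𝕜} (hf : HasDerivAt f f' x) :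
    HasDerivAt (fun t ↦ P.evalEval t (f t))
      ((derivativeX P).evalEval x (f x) + f' * (derivative P).evalEval x (f x)) x := by
  refine ((hasStrictFDerivAt_evalEval P (x, f x)).hasFDerivAt.comp_hasDerivAt x
    ((hasDerivAt_id x).prodMk hf)).congr_deriv ?_
  simp [mul_comm f']

end Calculus

end Bivariate

section Branches

open Metric
open Polynomial (derivative evalRingHom)
open Polynomial.Bivariate (swap)
open scoped Polynomial Polynomial.Bivariate

section FiberMap

/-- The map `(x, y) ↦ (x, P(x, y))`, whose fibre over `(x, 0)` consists of the points of the curve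
`P = 0` on the vertical line over `x`. -/
def fiberMap {R : Type*} [CommSemiring R] (P : R[X][Y]) (p : R × R) : R × R :=
  (p.1, P.evalEval p.1 p.2)

lemma finite_setOf_evalEval_eq_zero {R : Type*} [CommRing R] [IsDomain R] {P : R[X][Y]} {x : R}
    (hx : P.leadingCoeff.eval x ≠ 0) : {y | P.evalEval x y = 0}.Finite := by
  have h₀ : P.map (evalRingHom x) ≠ 0 := fun h ↦ hx <| by
    simpa using congrArg (fun q ↦ Polynomial.coeff q P.natDegree) h
  refine (P.map (evalRingHom x)).roots.toFinset.finite_toSet.subset fun y hy ↦ ?_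
  simpa [h₀, Polynomial.map_evalRingHom_eval] using hy

lemma norm_le_of_monic {K : Type*} [NormedDivisionRing K] {p : K[X]} (hp : p.Monic)
    (hd : p.natDegree ≠ 0) (y : K) :
    ‖y‖ ≤ ∑ i ∈ Finset.range p.natDegree, ‖p.coeff i‖ + ‖p.eval y‖ + 1 := by
  set q := p - Polynomial.C (p.eval y)
  have hdeg : (Polynomial.C (p.eval y)).degree < p.degree :=
    Polynomial.degree_C_le.trans_lt (Polynomial.natDegree_pos_iff_degree_pos.1 hd.bot_lt)
  have hq : q.Monic := hp.sub_of_left hdeg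
  have hroot : q.IsRoot y := by simp [q]
  have hcoeff : ∀ i ∈ Finset.range q.natDegree,
      ‖q.coeff i‖₊ ≤ ∑ i ∈ Finset.range p.natDegree, ‖p.coeff i‖₊ + ‖p.eval y‖₊ := by
    intro i hi
    rw [Polynomial.natDegree_sub_C] at hi
    have hC : ‖(Polynomial.C (p.eval y)).coeff i‖₊ ≤ ‖p.eval y‖₊ := by
      rw [Polynomial.coeff_C]
      split_ifs <;> simp
    rw [Polynomial.coeff_sub]
    exact (nnnorm_sub_le _ _).trans (add_le_add
      (Finset.single_le_sum_of_canonicallyOrdered (f := fun i ↦ ‖p.coeff i‖₊) hi) hC)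
  have hle : ‖y‖₊ ≤ ∑ i ∈ Finset.range p.natDegree, ‖p.coeff i‖₊ + ‖p.eval y‖₊ + 1 := by
    refine (hroot.norm_lt_cauchyBound hq.ne_zero).le.trans ?_
    rw [Polynomial.cauchyBound, hq.leadingCoeff, nnnorm_one, div_one]
    gcongr
    exact Finset.sup_le hcoeff
  simpa using NNReal.coe_le_coe.2 hle

variable {𝕜 : Type*} [NontriviallyNormedField 𝕜] {P : 𝕜[X][Y]}

lemma continuous_fiberMap (P : 𝕜[X][Y]) : Continuous (fiberMap P) :=
  continuous_fst.prodMk (continuous_evalEval P)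

lemma isClosedMap_fiberMap [ProperSpace 𝕜] (hP : P.Monic) (hd : P.natDegree ≠ 0) :
    IsClosedMap (fiberMap P) := by
  have hcont := continuous_fiberMap P
  refine (isProperMap_iff_isCompact_preimage.2 ⟨hcont, fun K hK ↦ ?_⟩).isClosedMap
  refine Metric.isCompact_of_isClosed_isBounded (hK.isClosed.preimage hcont) ?_
  obtain ⟨B, hB⟩ := hK.exists_bound_of_continuousOn (f := fun q : 𝕜 × 𝕜 ↦
    ∑ i ∈ Finset.range P.natDegree, ‖(P.coeff i).eval q.1‖ + ‖q.2‖ + 1) (by fun_prop)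
  obtain ⟨B', hB'⟩ := hK.exists_bound_of_continuousOn continuousOn_fst
  refine isBounded_iff_forall_norm_le.2 ⟨max B' B, fun q hq ↦ max_le_max (hB' (fiberMap P q) hq) ?_⟩
  have h := norm_le_of_monic (hP.map (evalRingHom q.1)) (by rwa [hP.natDegree_map]) q.2
  simp only [hP.natDegree_map, Polynomial.coeff_map, Polynomial.coe_evalRingHom,
    Polynomial.map_evalRingHom_eval] at h
  exact h.trans ((le_abs_self _).trans (hB (fiberMap P q) hq))

lemma exists_openPartialHomeomorph_fiberMap [CompleteSpace 𝕜] {p : 𝕜 × 𝕜}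
    (hp : (derivative P).evalEval p.1 p.2 ≠ 0) :
    ∃ e : OpenPartialHomeomorph (𝕜 × 𝕜) (𝕜 × 𝕜), p ∈ e.source ∧ fiberMap P = e ∧
      DifferentiableAt 𝕜 e.symm (fiberMap P p) := by
  set a := (derivativeX P).evalEval p.1 p.2
  set b := (derivative P).evalEval p.1 p.2
  let L : (𝕜 × 𝕜) ≃L[𝕜] (𝕜 × 𝕜) := ContinuousLinearEquiv.equivOfInverse
    ((ContinuousLinearMap.fst 𝕜 𝕜 𝕜).prod
      (a • ContinuousLinearMap.fst 𝕜 𝕜 𝕜 + b • ContinuousLinearMap.snd 𝕜 𝕜 𝕜))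
    ((ContinuousLinearMap.fst 𝕜 𝕜 𝕜).prod
      (b⁻¹ • (ContinuousLinearMap.snd 𝕜 𝕜 𝕜 - a • ContinuousLinearMap.fst 𝕜 𝕜 𝕜)))
    (fun q ↦ by ext <;> simp; field_simp) (fun q ↦ by ext <;> simp; field_simp; ring)
  have hd : HasStrictFDerivAt (fiberMap P) (L : (𝕜 × 𝕜) →L[𝕜] (𝕜 × 𝕜)) p :=
    hasStrictFDerivAt_fst.prodMk (hasStrictFDerivAt_evalEval P p)
  exact ⟨hd.toOpenPartialHomeomorph _, hd.mem_toOpenPartialHomeomorph_source, rfl,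
    hd.to_localInverse.hasFDerivAt.differentiableAt⟩

lemma isCoveringMapOn_fiberMap [ProperSpace 𝕜] (hP : P.Monic) (hd : P.natDegree ≠ 0) {U : Set 𝕜}
    (hU : ∀ x ∈ U, ∀ y, P.evalEval x y = 0 → (derivative P).evalEval x y ≠ 0) :
    IsCoveringMapOn (fiberMap P) (U ×ˢ {0}) := by
  refine (isClosedMap_fiberMap hP hd).isCoveringMapOn_of_isLocalHomeomorphOn ?_ fun q hq ↦ ?_
  · rintro ⟨x, v⟩ ⟨-, rfl⟩
    have hx : P.leadingCoeff.eval x ≠ 0 := by simp [hP.leadingCoeff]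
    refine ((Set.finite_singleton x).prod (finite_setOf_evalEval_eq_zero hx)).subset ?_
    rintro ⟨a, b⟩ hab
    obtain ⟨rfl, hb⟩ := Prod.mk.inj hab
    exact ⟨rfl, hb⟩
  · obtain ⟨e, he, heq, -⟩ := exists_openPartialHomeomorph_fiberMap (hU q.1 hq.1 q.2 hq.2)
    exact ⟨e, he, heq⟩

lemma differentiableAt_of_evalEval_eq_zero [CompleteSpace 𝕜] {f : 𝕜 → 𝕜} {x : 𝕜}
    (hf : ContinuousAt f x) (hfP : ∀ᶠ t in nhds x, P.evalEval t (f t) = 0)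
    (hreg : (derivative P).evalEval x (f x) ≠ 0) : DifferentiableAt 𝕜 f x := by
  obtain ⟨e, he, heq, hdiff⟩ := exists_openPartialHomeomorph_fiberMap (p := (x, f x)) hreg
  have hdiff' : DifferentiableAt 𝕜 (fun t : 𝕜 ↦ (e.symm (t, (0 : 𝕜))).2) x := by
    have h0 : fiberMap P (x, f x) = (x, 0) := Prod.ext rfl hfP.self_of_nhds
    rw [h0] at hdiff
    exact (hdiff.comp x (f := fun t : 𝕜 ↦ (t, (0 : 𝕜))) (by fun_prop)).snd
  refine hdiff'.congr_of_eventuallyEq ?_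
  filter_upwards [(continuousAt_id.prodMk hf) (e.open_source.mem_nhds he), hfP] with t ht htP
  have het : e (t, f t) = (t, 0) := by rw [← heq]; exact Prod.ext rfl htP
  rw [← het, e.left_inv (show (t, f t) ∈ e.source from ht)]

lemma eventuallyEq_of_evalEval_eq_zero [CompleteSpace 𝕜] {f g : 𝕜 → 𝕜} {x : 𝕜}
    (hf : ContinuousAt f x) (hg : ContinuousAt g x)
    (hfP : ∀ᶠ t in nhds x, P.evalEval t (f t) = 0) (hgP : ∀ᶠ t in nhds x, P.evalEval t (g t) = 0)
    (hfg : f x = g x) (hreg : (derivative P).evalEval x (f x) ≠ 0) : f =ᶠ[nhds x] g := by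
  obtain ⟨e, he, heq, -⟩ := exists_openPartialHomeomorph_fiberMap (p := (x, f x)) hreg
  have he' : (x, g x) ∈ e.source := by rwa [← hfg]
  filter_upwards [(continuousAt_id.prodMk hf) (e.open_source.mem_nhds he),
    (continuousAt_id.prodMk hg) (e.open_source.mem_nhds he'), hfP, hgP] with t hft hgt hf0 hg0
  have het : e (t, f t) = e (t, g t) := by
    rw [← heq]
    exact Prod.ext rfl (hf0.trans hg0.symm)
  exact congrArg Prod.snd (e.injOn hft hgt het)

end FiberMap

section Complex

variable {P : ℂ[X][Y]} {c y₀ : ℂ} {R : ℝ}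

lemma eqOn_of_evalEval_eq_zero {U : Set ℂ} (hU : IsOpen U) (hc : IsPreconnected U) {f g : ℂ → ℂ}
    (hf : DifferentiableOn ℂ f U) (hg : DifferentiableOn ℂ g U)
    (hfP : ∀ x ∈ U, P.evalEval x (f x) = 0) (hgP : ∀ x ∈ U, P.evalEval x (g x) = 0)
    {x₀ : ℂ} (hx₀ : x₀ ∈ U) (hfg : f x₀ = g x₀)
    (hreg : (derivative P).evalEval x₀ (f x₀) ≠ 0) : Set.EqOn f g U := by
  have hUx := hU.mem_nhds hx₀
  refine (hf.analyticOnNhd hU).eqOn_of_preconnected_of_eventuallyEq (hg.analyticOnNhd hU) hc hx₀ ?_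
  exact eventuallyEq_of_evalEval_eq_zero (hf.differentiableAt hUx).continuousAt
    (hg.differentiableAt hUx).continuousAt (Filter.eventually_of_mem hUx hfP)
    (Filter.eventually_of_mem hUx hgP) hfg hreg

/- The fibre map of a monic polynomial is a covering over the regular points, so the inclusion of
the disc, which is simply connected, lifts. -/
lemma exists_branch_of_monic (hP : P.Monic) (hd : P.natDegree ≠ 0) (hR : 0 < R)
    (hreg : ∀ x ∈ ball c R, ∀ y, P.evalEval x y = 0 → (derivative P).evalEval x y ≠ 0)
    (h₀ : P.evalEval c y₀ = 0) :
    ∃ f : ℂ → ℂ, DifferentiableOn ℂ f (ball c R) ∧ f c = y₀ ∧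
      ∀ x ∈ ball c R, P.evalEval x (f x) = 0 := by
  have : ContractibleSpace (ball c R) := contractibleSpace_ball hR
  have : LocallyPathConnectedSpace (ball c R) :=
    isOpen_ball.isOpenEmbedding_subtypeVal.locallyPathConnectedSpace
  obtain ⟨F, ⟨hFc, hF⟩, -⟩ := (isCoveringMapOn_fiberMap hP hd hreg).existsUnique_continuousMap_lifts
    (A := ball c R) ⟨fun x ↦ ((x : ℂ), (0 : ℂ)), by fun_prop⟩
    (a₀ := ⟨c, mem_ball_self hR⟩) (e₀ := (c, y₀)) (by simp [fiberMap, h₀]) (fun x ↦ ⟨x.2, rfl⟩)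
  have hF' : ∀ x : ball c R, fiberMap P (F x) = (↑x, 0) := fun x ↦ congrFun hF x
  have hfst : ∀ x : ball c R, (F x).1 = x := fun x ↦ congrArg Prod.fst (hF' x)
  have hsnd : ∀ x : ball c R, P.evalEval (x : ℂ) (F x).2 = 0 := fun x ↦ by
    simpa only [fiberMap, hfst] using congrArg Prod.snd (hF' x)
  obtain ⟨f, hf⟩ : ∃ f : ℂ → ℂ, ∀ x : ball c R, f x = (F x).2 :=
    ⟨fun x ↦ if hx : x ∈ ball c R then (F ⟨x, hx⟩).2 else 0, fun x ↦ dif_pos x.2⟩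
  have hfP : ∀ x ∈ ball c R, P.evalEval x (f x) = 0 := fun x hx ↦ by
    rw [hf ⟨x, hx⟩]
    exact hsnd ⟨x, hx⟩
  have hcont : ContinuousOn f (ball c R) := by
    rw [continuousOn_iff_continuous_domRestrict]
    exact (continuous_snd.comp F.continuous).congr fun x ↦ (hf x).symm
  refine ⟨f, fun x hx ↦ DifferentiableAt.differentiableWithinAt ?_, ?_, hfP⟩
  · have hx' := isOpen_ball.mem_nhds hx
    exact differentiableAt_of_evalEval_eq_zero (hcont.continuousAt hx')
      (Filter.eventually_of_mem hx' hfP) (hreg x hx _ (hfP x hx))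
  · rw [hf ⟨c, mem_ball_self hR⟩, hFc]

end Complex

section IntegralNormalization

lemma evalEval_integralNormalization_leadingCoeff_mul {R : Type*} [CommRing R] {P : R[X][Y]}
    (hd : P.natDegree ≠ 0) (x y : R) :
    P.integralNormalization.evalEval x (P.leadingCoeff.eval x * y) =
      P.leadingCoeff.eval x ^ (P.natDegree - 1) * P.evalEval x y := by
  simpa only [Polynomial.eval₂_evalRingHom, Polynomial.coe_evalRingHom] using
    Polynomial.integralNormalization_eval₂_leadingCoeff_mul (Nat.one_le_iff_ne_zero.2 hd)
      (evalRingHom x) y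

lemma hasDerivAt_evalEval_snd {𝕜 : Type*} [NontriviallyNormedField 𝕜] (P : 𝕜[X][Y]) (x y : 𝕜) :
    HasDerivAt (fun t ↦ P.evalEval x t) ((derivative P).evalEval x y) y := by
  simpa only [Polynomial.derivative_map, Polynomial.map_evalRingHom_eval] using
    (P.map (evalRingHom x)).hasDerivAt y

lemma leadingCoeff_mul_evalEval_derivative_integralNormalization {𝕜 : Type*}
    [NontriviallyNormedField 𝕜] {P : 𝕜[X][Y]} (hd : P.natDegree ≠ 0) (x y : 𝕜) :
    P.leadingCoeff.eval x *
        (derivative P.integralNormalization).evalEval x (P.leadingCoeff.eval x * y) =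
      P.leadingCoeff.eval x ^ (P.natDegree - 1) * (derivative P).evalEval x y := by
  have hlin : HasDerivAt (fun t ↦ P.leadingCoeff.eval x * t) (P.leadingCoeff.eval x) y := by
    simpa using (hasDerivAt_id y).const_mul (P.leadingCoeff.eval x)
  have hcomp := (hasDerivAt_evalEval_snd P.integralNormalization x _).comp y hlin
  have hmul := (hasDerivAt_evalEval_snd P x y).const_mul
    (P.leadingCoeff.eval x ^ (P.natDegree - 1))
  rw [mul_comm]
  exact hcomp.unique <| hmul.congr_of_eventuallyEq <| Filter.Eventually.of_forall fun t ↦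
    evalEval_integralNormalization_leadingCoeff_mul hd x t

lemma exists_branch {P : ℂ[X][Y]} {c y₀ : ℂ} {R : ℝ} (hd : P.natDegree ≠ 0) (hR : 0 < R)
    (hreg : ∀ x ∈ ball c R, RegularOver P x) (h₀ : P.evalEval c y₀ = 0) :
    ∃ f : ℂ → ℂ, DifferentiableOn ℂ f (ball c R) ∧ f c = y₀ ∧
      ∀ x ∈ ball c R, P.evalEval x (f x) = 0 := by
  set Q := P.integralNormalization
  set l := P.leadingCoeff
  have hl : ∀ x ∈ ball c R, l.eval x ≠ 0 := fun x hx ↦ (hreg x hx).1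
  have hQ : Q.Monic := Polynomial.monic_integralNormalization (by rintro rfl; simp at hd)
  have hdQ : Q.natDegree ≠ 0 := by
    simpa only [Q, Polynomial.natDegree, Polynomial.degree_integralNormalization] using hd
  have hzero : ∀ x ∈ ball c R, ∀ y, Q.evalEval x (l.eval x * y) = 0 → P.evalEval x y = 0 := by
    intro x hx y hy
    rw [evalEval_integralNormalization_leadingCoeff_mul hd] at hy
    exact (mul_eq_zero.1 hy).resolve_left (pow_ne_zero _ (hl x hx))
  have hregQ : ∀ x ∈ ball c R, ∀ y, Q.evalEval x y = 0 → (derivative Q).evalEval x y ≠ 0 := by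
    intro x hx y hy hy'
    obtain ⟨t, rfl⟩ : ∃ t, y = l.eval x * t := ⟨y / l.eval x, (mul_div_cancel₀ y (hl x hx)).symm⟩
    have h := leadingCoeff_mul_evalEval_derivative_integralNormalization hd x t
    rw [hy', mul_zero] at h
    exact mul_ne_zero (pow_ne_zero _ (hl x hx)) ((hreg x hx).2 t (hzero x hx t hy)).1 h.symm
  obtain ⟨g, hg, hgc, hgQ⟩ := exists_branch_of_monic (y₀ := l.eval c * y₀) hQ hdQ hR hregQ
    (by rw [evalEval_integralNormalization_leadingCoeff_mul hd, h₀, mul_zero])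
  refine ⟨fun x ↦ g x / l.eval x, hg.div l.differentiable.differentiableOn hl, ?_, fun x hx ↦ ?_⟩
  · simp only [hgc]
    exact mul_div_cancel_left₀ _ (hl c (mem_ball_self hR))
  · refine hzero x hx _ ?_
    rw [mul_div_cancel₀ _ (hl x hx)]
    exact hgQ x hx

end IntegralNormalization

end Branches

section NearlyAffine

open Metric
open Polynomial (derivative evalRingHom)
open Polynomial.Bivariate (swap)
open scoped Polynomial Polynomial.Bivariate

/-- Through `p` passes a holomorphic branch of the curve `P = 0`: over the disc of radius `r` about
`p.1` the curve contains a graph through `p`, transverse to the vertical lines, whose height stays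
within `b` of that of `p`. -/
def HasBranch (P : ℂ[X][Y]) (p : ℂ × ℂ) (r b : ℝ) : Prop :=
  ∃ f : ℂ → ℂ, DifferentiableOn ℂ f (ball p.1 r) ∧ f p.1 = p.2 ∧
    (∀ x ∈ ball p.1 r, P.evalEval x (f x) = 0 ∧ (derivative P).evalEval x (f x) ≠ 0) ∧
    ∀ x ∈ ball p.1 r, ‖f x - p.2‖ ≤ b

variable {P : ℂ[X][Y]} {S : Finset (ℂ × ℂ)} {c : ℂ} {R r : ℝ} {f : ℂ → ℂ}

lemma exists_ne_map_eq_of_evalEval_eq_zero {ι : Type*} {S : Finset ι} {x : ℂ} {y : ι → ℂ}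
    (hx : P.map (evalRingHom x) ≠ 0) (hS : ∀ i ∈ S, P.evalEval x (y i) = 0)
    (hcard : P.natDegree < S.card) : ∃ i ∈ S, ∃ j ∈ S, i ≠ j ∧ y i = y j := by
  refine Finset.exists_ne_map_eq_of_card_lt_of_maps_to
    (t := (P.map (evalRingHom x)).roots.toFinset) ?_ fun i hi ↦ ?_
  · exact (Multiset.toFinset_card_le _).trans_lt <| (Polynomial.card_roots' _).trans_lt <|
      Polynomial.natDegree_map_le.trans_lt hcard
  · simpa [hx, Polynomial.map_evalRingHom_eval] using hS i hi

lemma exists_close_of_hasBranch {b : ℂ × ℂ → ℝ} (hr : 0 < r)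
    (hS : ∀ p ∈ S, HasBranch P p r (b p)) (hcard : P.natDegree < S.card)
    (hclose : ∀ p ∈ S, ∀ q ∈ S, ‖p.1 - q.1‖ < r) :
    ∃ p ∈ S, ∃ q ∈ S, p ≠ q ∧ ‖p.2 - q.2‖ ≤ min (b p) (b q) := by
  choose! f hf hfp hfP hfb using hS
  obtain ⟨o, ho⟩ : S.Nonempty := Finset.card_pos.1 (by omega)
  have hmem : ∀ p ∈ S, ∀ q ∈ S, q.1 ∈ ball p.1 r :=
    fun p hp q hq ↦ mem_ball_iff_norm.2 (hclose q hq p hp)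
  have ho₀ : P.map (evalRingHom o.1) ≠ 0 := by
    intro h
    apply (hfP o ho o.1 (mem_ball_self hr)).2
    rw [← Polynomial.map_evalRingHom_eval, ← Polynomial.derivative_map, h, map_zero,
      Polynomial.eval_zero]
  obtain ⟨p, hp, q, hq, hpq, heq⟩ := exists_ne_map_eq_of_evalEval_eq_zero ho₀
    (fun p hp ↦ (hfP p hp o.1 (hmem p hp o ho)).1) hcard
  have hpq_eq : Set.EqOn (f p) (f q) (ball p.1 r ∩ ball q.1 r) :=
    eqOn_of_evalEval_eq_zero (isOpen_ball.inter isOpen_ball)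
      ((convex_ball _ _).inter (convex_ball _ _)).isPreconnected
      ((hf p hp).mono Set.inter_subset_left) ((hf q hq).mono Set.inter_subset_right)
      (fun x hx ↦ (hfP p hp x hx.1).1) (fun x hx ↦ (hfP q hq x hx.2).1)
      ⟨hmem p hp o ho, hmem q hq o ho⟩ heq (hfP p hp _ (hmem p hp o ho)).2
  refine ⟨p, hp, q, hq, hpq, le_min ?_ ?_⟩
  · have := hfb p hp _ (hmem p hp q hq)
    rwa [hpq_eq ⟨hmem p hp q hq, hmem q hq q hq⟩, hfp q hq, norm_sub_rev] at this
  · have := hfb q hq _ (hmem q hq p hp)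
    rwa [← hpq_eq ⟨hmem p hp p hp, hmem q hq p hp⟩, hfp p hp] at this

section Branch

variable (hf : DifferentiableOn ℂ f (ball c R)) (hfP : ∀ x ∈ ball c R, P.evalEval x (f x) = 0)
include hf hfP

lemma derivativeX_add_deriv_mul_derivative_eq_zero {x : ℂ} (hx : x ∈ ball c R) :
    (derivativeX P).evalEval x (f x) + deriv f x * (derivative P).evalEval x (f x) = 0 := by
  have hderiv := hasDerivAt_evalEval P
    (hf.differentiableAt (isOpen_ball.mem_nhds hx)).hasDerivAt
  refine hderiv.unique ((hasDerivAt_const x (0 : ℂ)).congr_of_eventuallyEq ?_)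
  filter_upwards [isOpen_ball.mem_nhds hx] with t ht using hfP t ht

lemma deriv_ne_zero_of_regularOver (hreg : ∀ x ∈ ball c R, RegularOver P x) {x : ℂ}
    (hx : x ∈ ball c R) : deriv f x ≠ 0 := by
  intro h₀
  have h := derivativeX_add_deriv_mul_derivative_eq_zero hf hfP hx
  rw [h₀, zero_mul, add_zero] at h
  exact ((hreg x hx).2 _ (hfP x hx)).2 h

lemma deriv_eq_of_dvd (hreg : ∀ x ∈ ball c R, RegularOver P x) {v : ℂ}
    (hv : P ∣ derivativeX P + v • derivative P) {x : ℂ} (hx : x ∈ ball c R) : deriv f x = v := by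
  obtain ⟨Q, hQ⟩ := hv
  have hv := congrArg (Polynomial.evalEval x (f x)) hQ
  rw [Polynomial.evalEval_mul, hfP x hx, zero_mul, Polynomial.evalEval_add,
    Polynomial.evalEval_smul, smul_eq_mul] at hv
  apply mul_right_cancel₀ ((hreg x hx).2 _ (hfP x hx)).1
  linear_combination derivativeX_add_deriv_mul_derivative_eq_zero hf hfP hx - hv

lemma encard_deriv_eq_le {d : ℕ} (hP : Irreducible P) (hdeg : P.natDegree ≠ 0)
    (hPd : P ∈ bidegreeLE ℂ d) {v : ℂ} (hv : ¬ P ∣ derivativeX P + v • derivative P) :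
    {x ∈ ball c R | deriv f x = v}.encard ≤ (2 * d * d : ℕ) := by
  set H := derivativeX P + v • derivative P
  have hH : H ∈ bidegreeLE ℂ d := add_mem (derivativeX_mem_bidegreeLE hPd)
    (Submodule.smul_mem _ v (derivative_mem_bidegreeLE hPd))
  have hsub : {x ∈ ball c R | deriv f x = v} ⊆ ((P.resultant H).roots.toFinset : Set ℂ) := by
    rintro x ⟨hx, rfl⟩
    rw [Finset.mem_coe, Multiset.mem_toFinset,
      Polynomial.mem_roots (resultant_ne_zero_of_irreducible hP hdeg hv)]
    refine eval_resultant_eq_zero hdeg (hfP x hx) ?_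
    rw [Polynomial.evalEval_add, Polynomial.evalEval_smul]
    exact derivativeX_add_deriv_mul_derivative_eq_zero hf hfP hx
  refine (Set.encard_le_encard hsub).trans ?_
  rw [Set.encard_coe_eq_coe_finsetCard]
  exact_mod_cast card_roots_resultant_le hPd hH

end Branch

/- The slope of a branch is an algebraic function, so it takes each value boundedly often unless it
is constant. -/
lemma exists_branch_nearly_affine (d : ℕ) : ∃ κ : ℝ, 0 < κ ∧ κ ≤ 1 ∧ ∀ P : ℂ[X][Y],
    Irreducible P → P.natDegree ≠ 0 → P ∈ bidegreeLE ℂ d → ∀ (c : ℂ) (R : ℝ), 0 < R →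
    (∀ x ∈ ball c R, RegularOver P x) → ∀ f : ℂ → ℂ, DifferentiableOn ℂ f (ball c R) →
    (∀ x ∈ ball c R, P.evalEval x (f x) = 0) →
    ∀ x ∈ ball c (κ * R), ‖deriv f x - deriv f c‖ ≤ ‖deriv f c‖ / 2 := by
  obtain ⟨κ, hκ₀, hκ₁, hκ⟩ := exists_nearly_constant (2 * d * d)
  refine ⟨κ, hκ₀, hκ₁, fun P hP hdeg hPd c R hR hreg f hf hfP ↦ ?_⟩
  by_cases hv : ∃ v : ℂ, P ∣ derivativeX P + v • derivative P
  · obtain ⟨v, hv⟩ := hv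
    intro x hx
    have hx' : x ∈ ball c R := ball_subset_ball (mul_le_of_le_one_left hR.le hκ₁) hx
    rw [deriv_eq_of_dvd hf hfP hreg hv hx', deriv_eq_of_dvd hf hfP hreg hv (mem_ball_self hR),
      sub_self, norm_zero]
    positivity
  · exact hκ (deriv f) c R hR (hf.deriv isOpen_ball)
      (fun x hx ↦ deriv_ne_zero_of_regularOver hf hfP hreg hx)
      fun v ↦ encard_deriv_eq_le hf hfP hP hdeg hPd fun h ↦ hv ⟨v, h⟩

lemma exists_inverse_of_deriv_close {a : ℂ} (hr : 0 < r) (hf : DifferentiableOn ℂ f (ball c r))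
    (hf₀ : ∀ x ∈ ball c r, deriv f x ≠ 0) (ha₀ : a ≠ 0)
    (ha : ∀ x ∈ ball c r, ‖deriv f x - a‖ ≤ ‖a‖ / 2) :
    ∃ g : ℂ → ℂ, DifferentiableOn ℂ g (ball (f c) (‖a‖ * r / 8)) ∧ g (f c) = c ∧
      ∀ y ∈ ball (f c) (‖a‖ * r / 8), g y ∈ ball c r ∧ f (g y) = y := by
  choose! g hg hfg using ball_subset_image_ball_of_deriv_close hf ha ha₀ hr
  have hinj := injOn_of_deriv_close hf ha ha₀
  have hfc : f c ∈ ball (f c) (‖a‖ * r / 8) := mem_ball_self (by positivity)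
  have hlip : LipschitzOnWith (2 / ‖a‖₊) g (ball (f c) (‖a‖ * r / 8)) := by
    refine LipschitzOnWith.of_dist_le_mul fun y hy z hz ↦ ?_
    have h := le_norm_image_sub_of_deriv_close hf ha (hg hz) (hg hy)
    rw [hfg hy, hfg hz] at h
    rw [NNReal.coe_div, NNReal.coe_ofNat, coe_nnnorm, dist_eq_norm, dist_eq_norm,
      div_mul_eq_mul_div, le_div_iff₀ (norm_pos_iff.2 ha₀)]
    linarith
  refine ⟨g, fun y hy ↦ ?_, hinj (hg hfc) (mem_ball_self hr) (hfg hfc), fun y hy ↦ ⟨hg hy, hfg hy⟩⟩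
  have hynhds := isOpen_ball.mem_nhds hy
  refine (HasDerivAt.of_local_left_inverse (hlip.continuousOn.continuousAt hynhds)
    (hf.differentiableAt (isOpen_ball.mem_nhds (hg hy))).hasDerivAt (hf₀ _ (hg hy)) ?_)
    |>.differentiableAt.differentiableWithinAt
  filter_upwards [hynhds] with z hz using hfg hz

section SlopeDichotomy

variable {κ s₁ s₂ : ℝ} {p : ℂ × ℂ} (hκ₀ : 0 < κ) (hκ₁ : κ ≤ 1) (hs₁ : 0 < s₁)
  (hreg : ∀ x ∈ ball p.1 s₁, RegularOver P x)
  (hf : DifferentiableOn ℂ f (ball p.1 s₁)) (hfp : f p.1 = p.2)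
  (hfP : ∀ x ∈ ball p.1 s₁, P.evalEval x (f x) = 0)
  (haff : ∀ x ∈ ball p.1 (κ * s₁), ‖deriv f x - deriv f p.1‖ ≤ ‖deriv f p.1‖ / 2)
include hκ₀ hκ₁ hs₁ hreg hf hfp hfP haff

lemma hasBranch_of_norm_deriv_mul_le (hs : ‖deriv f p.1‖ * s₁ ≤ s₂) :
    HasBranch P p (κ / 8 * s₁) (2 * s₂) := by
  have hsub : ball p.1 (κ / 8 * s₁) ⊆ ball p.1 (κ * s₁) := ball_subset_ball (by gcongr; linarith)
  have hsub' : ball p.1 (κ * s₁) ⊆ ball p.1 s₁ :=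
    ball_subset_ball (mul_le_of_le_one_left hs₁.le hκ₁)
  refine ⟨f, hf.mono (hsub.trans hsub'), hfp, fun x hx ↦ ?_, fun x hx ↦ ?_⟩
  · have hx' := hsub' (hsub hx)
    exact ⟨hfP x hx', ((hreg x hx').2 _ (hfP x hx')).1⟩
  · have hxs : ‖x - p.1‖ ≤ s₁ := (mem_ball_iff_norm.1 (hsub' (hsub hx))).le
    calc ‖f x - p.2‖ ≤ 3 / 2 * ‖deriv f p.1‖ * ‖x - p.1‖ := hfp ▸
          norm_image_sub_le_of_deriv_close (hf.mono hsub') haff (mem_ball_self (by positivity))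
            (hsub hx)
      _ ≤ 3 / 2 * (‖deriv f p.1‖ * s₁) := by rw [mul_assoc]; gcongr
      _ ≤ 2 * s₂ := by
        have : 0 ≤ ‖deriv f p.1‖ * s₁ := by positivity
        linarith

lemma hasBranch_swap_of_le_norm_deriv_mul (hs₂ : 0 < s₂) (hs : s₂ ≤ ‖deriv f p.1‖ * s₁) :
    HasBranch (swap P) p.swap (κ / 8 * s₂) (2 * s₁) := by
  have hsub : ball p.1 (κ * s₁) ⊆ ball p.1 s₁ :=
    ball_subset_ball (mul_le_of_le_one_left hs₁.le hκ₁)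
  have ha₀ : deriv f p.1 ≠ 0 := norm_pos_iff.1 (pos_of_mul_pos_left (hs₂.trans_le hs) hs₁.le)
  obtain ⟨g, hgd, hgp, hg⟩ := exists_inverse_of_deriv_close (by positivity) (hf.mono hsub)
    (fun x hx ↦ deriv_ne_zero_of_regularOver hf hfP hreg (hsub hx)) ha₀ haff
  rw [hfp] at hgd hgp hg
  have hle : κ / 8 * s₂ ≤ ‖deriv f p.1‖ * (κ * s₁) / 8 :=
    calc κ / 8 * s₂ ≤ κ / 8 * (‖deriv f p.1‖ * s₁) := by gcongr
      _ = ‖deriv f p.1‖ * (κ * s₁) / 8 := by ring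
  refine ⟨g, hgd.mono (ball_subset_ball hle), hgp, fun y hy ↦ ?_, fun y hy ↦ ?_⟩ <;>
    obtain ⟨hgy, hfgy⟩ := hg y (ball_subset_ball hle hy)
  · have hP := hfP _ (hsub hgy)
    have hPX := ((hreg _ (hsub hgy)).2 _ hP).2
    rw [hfgy] at hP hPX
    rw [evalEval_swap, evalEval_derivative_swap]
    exact ⟨hP, hPX⟩
  · have := mem_ball_iff_norm.1 (hsub hgy)
    simp only [Prod.snd_swap]
    linarith

end SlopeDichotomy

theorem hasBranch_or_hasBranch_swap (d : ℕ) : ∃ c : ℝ, 0 < c ∧ c ≤ 1 ∧ ∀ P : ℂ[X][Y],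
    Irreducible P → P.natDegree ≠ 0 → P ∈ bidegreeLE ℂ d →
    ∀ (p : ℂ × ℂ) (s₁ s₂ : ℝ), 0 < s₁ → 0 < s₂ →
    (∀ x ∈ ball p.1 s₁, RegularOver P x) → P.evalEval p.1 p.2 = 0 →
    HasBranch P p (c * s₁) (2 * s₂) ∨ HasBranch (swap P) p.swap (c * s₂) (2 * s₁) := by
  obtain ⟨κ, hκ₀, hκ₁, hκ⟩ := exists_branch_nearly_affine d
  refine ⟨κ / 8, by positivity, by linarith, fun P hP hdeg hPd p s₁ s₂ hs₁ hs₂ hreg hp ↦ ?_⟩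
  obtain ⟨f, hf, hfp, hfP⟩ := exists_branch hdeg hs₁ hreg hp
  have haff := hκ P hP hdeg hPd p.1 s₁ hs₁ hreg f hf hfP
  rcases le_total (‖deriv f p.1‖ * s₁) s₂ with hs | hs
  · exact .inl (hasBranch_of_norm_deriv_mul_le hκ₀ hκ₁ hs₁ hreg hf hfp hfP haff hs)
  · exact .inr (hasBranch_swap_of_le_norm_deriv_mul hκ₀ hκ₁ hs₁ hreg hf hfp hfP haff hs₂ hs)

end NearlyAffine

section TropicalLines

section LinearOrder

variable {ι κ₁ κ₂ α β : Type*} [DecidableEq κ₁] [DecidableEq κ₂] [LinearOrder α] [LinearOrder β]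
  {Q : Finset ι} {u : ι → α} {v : ι → β} {c₁ : ι → κ₁} {c₂ : ι → κ₂} {s₁ : κ₁ → α} {s₂ : κ₂ → β}

lemma card_filter_last_le (hu : Set.InjOn u Q) :
    {p ∈ Q | ∀ q ∈ Q, c₁ q = c₁ p → u q ≤ u p}.card ≤ (Q.image c₁).card := by
  refine Finset.card_le_card_of_injOn c₁
    (fun p hp ↦ Finset.mem_image_of_mem _ (Finset.mem_filter.1 hp).1) fun p hp q hq hpq ↦ ?_
  obtain ⟨hp, hp'⟩ := Finset.mem_filter.1 hp
  obtain ⟨hq, hq'⟩ := Finset.mem_filter.1 hq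
  exact hu hp hq (le_antisymm (hq' p hp hpq) (hp' q hq hpq.symm))

lemma card_le_card_image_of_lt (hu : ∀ p ∈ Q, u p < s₁ (c₁ p))
    (hsep : ∀ p ∈ Q, ∀ q ∈ Q, p ≠ q → s₁ (c₁ p) < u q ∨ s₁ (c₁ q) < u p) :
    Q.card ≤ (Q.image c₁).card := by
  refine Finset.card_le_card_of_injOn c₁ (fun p hp ↦ Finset.mem_image_of_mem _ hp)
    fun p hp q hq hpq ↦ ?_
  by_contra hne
  rcases hsep p hp q hq hne with h | h
  · exact (h.trans (hu q hq)).ne (congrArg s₁ hpq)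
  · exact (h.trans (hu p hp)).ne (congrArg s₁ hpq.symm)

section Separated

variable (hinj : Set.InjOn u Q) (hu : ∀ p ∈ Q, u p < s₁ (c₁ p)) (hv : ∀ p ∈ Q, v p < s₂ (c₂ p))
  (hsep : ∀ p ∈ Q, ∀ q ∈ Q, p ≠ q →
    s₁ (c₁ p) < u q ∨ s₁ (c₁ q) < u p ∨ s₂ (c₂ p) < v q ∨ s₂ (c₂ q) < v p)
include hinj hu hv hsep

/- In increasing order, a point and its successor lie in different first cells or in different
second cells. -/
lemma card_le_of_increasing (hmono : ∀ p ∈ Q, ∀ q ∈ Q, u p < u q → v p < v q) :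
    Q.card ≤ (Q.image c₁).card + (Q.image c₂).card := by
  have hcover : Q ⊆ {p ∈ Q | ∀ q ∈ Q, c₁ q = c₁ p → u q ≤ u p} ∪
      {p ∈ Q | ∀ q ∈ Q, c₂ q = c₂ p → u q ≤ u p} := by
    intro p hp
    by_contra hcon
    simp only [Finset.mem_union, Finset.mem_filter, hp, true_and, not_or, not_forall,
      not_le] at hcon
    obtain ⟨⟨q, hq, hqc, hpq⟩, ⟨q', hq', hqc', hpq'⟩⟩ := hcon
    obtain ⟨r, hr, hpr, hrq, hrq'⟩ : ∃ r ∈ Q, u p < u r ∧ u r ≤ u q ∧ v r ≤ v q' := by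
      rcases lt_trichotomy (u q) (u q') with h | h | h
      · exact ⟨q, hq, hpq, le_rfl, (hmono q hq q' hq' h).le⟩
      · exact ⟨q, hq, hpq, le_rfl, (congrArg v (hinj hq hq' h)).le⟩
      · exact ⟨q', hq', hpq', h.le, le_rfl⟩
    have hur : u r < s₁ (c₁ p) := hqc ▸ hrq.trans_lt (hu q hq)
    have hvr : v r < s₂ (c₂ p) := hqc' ▸ hrq'.trans_lt (hv q' hq')
    rcases hsep p hp r hr fun h ↦ hpr.ne (congrArg u h) with h | h | h | h
    · exact h.not_gt hur
    · exact h.not_gt (hpr.trans (hu r hr))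
    · exact h.not_gt hvr
    · exact h.not_gt ((hmono p hp r hr hpr).trans (hv r hr))
  calc Q.card ≤ _ := Finset.card_le_card hcover
    _ ≤ _ := Finset.card_union_le _ _
    _ ≤ _ := add_le_add (card_filter_last_le hinj) (card_filter_last_le hinj)

omit [DecidableEq κ₁] [DecidableEq κ₂] in
lemma exists_successor_first_of_decreasing (hanti : ∀ p ∈ Q, ∀ q ∈ Q, u p < u q → v q < v p)
    {p t : ι} (hp : p ∈ Q) (ht : t ∈ Q) (htc : c₁ t = c₁ p) (hpt : u p < u t) :
    ∃ q ∈ Q, u p < u q ∧ (∀ r ∈ Q, u p < u r → u q ≤ u r) ∧ ∀ r ∈ Q, c₂ r = c₂ q → u q ≤ u r := by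
  obtain ⟨q, hq, hqmin⟩ := Finset.exists_min_image {r ∈ Q | u p < u r} u
    ⟨t, Finset.mem_filter.2 ⟨ht, hpt⟩⟩
  obtain ⟨hq, hpq⟩ := Finset.mem_filter.1 hq
  have hmin : ∀ r ∈ Q, u p < u r → u q ≤ u r := fun r hr h ↦ hqmin r (Finset.mem_filter.2 ⟨hr, h⟩)
  have hsep' : s₂ (c₂ q) < v p := by
    rcases hsep p hp q hq fun h ↦ hpq.ne (congrArg u h) with h | h | h | h
    · exact absurd ((hmin t ht hpt).trans_lt (htc ▸ hu t ht)) h.not_gt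
    · exact absurd (hpq.trans (hu q hq)) h.not_gt
    · exact absurd ((hanti p hp q hq hpq).trans (hv p hp)) h.not_gt
    · exact h
  refine ⟨q, hq, hpq, hmin, fun r hr hrc ↦ hmin r hr <| not_le.1 fun hrp ↦ ?_⟩
  have hpr : v p ≤ v r := by
    rcases hrp.lt_or_eq with h | h
    · exact (hanti r hr p hp h).le
    · exact (congrArg v (hinj hr hp h)).ge
  exact (hsep'.trans_le hpr).not_gt (hrc ▸ hv r hr)

/- In decreasing order, either a point is the last one in its first cell, or its successor is the
first one in its second cell. -/
lemma card_le_of_decreasing (hanti : ∀ p ∈ Q, ∀ q ∈ Q, u p < u q → v q < v p) :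
    Q.card ≤ (Q.image c₁).card + (Q.image c₂).card := by
  set F := {p ∈ Q | ∀ q ∈ Q, c₁ q = c₁ p → u q ≤ u p} with hF
  have hsucc : ∀ p ∈ Q \ F, ∃ q ∈ Q, u p < u q ∧ (∀ r ∈ Q, u p < u r → u q ≤ u r) ∧
      ∀ r ∈ Q, c₂ r = c₂ q → u q ≤ u r := by
    intro p hp
    obtain ⟨hp, hpF⟩ := Finset.mem_sdiff.1 hp
    simp only [hF, Finset.mem_filter, hp, true_and, not_forall, not_le] at hpF
    obtain ⟨t, ht, htc, hpt⟩ := hpF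
    exact exists_successor_first_of_decreasing hinj hu hv hsep hanti hp ht htc hpt
  choose! f hfQ hlt hmin hfirst using hsucc
  have hle : (Q \ F).card ≤ (Q.image c₂).card := by
    refine (Finset.card_le_card_of_injOn f (fun p hp ↦ Finset.mem_filter.2 ⟨hfQ p hp, hfirst p hp⟩)
      fun p hp q hq hpq ↦ ?_).trans (card_filter_last_le (u := OrderDual.toDual ∘ u)
        (OrderDual.toDual.injective.comp_injOn hinj))
    have hpQ := (Finset.mem_sdiff.1 hp).1
    have hqQ := (Finset.mem_sdiff.1 hq).1
    refine hinj hpQ hqQ (le_antisymm (not_lt.1 fun h ↦ ?_) (not_lt.1 fun h ↦ ?_))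
    · exact (hpq ▸ hmin q hq p hpQ h).not_gt (hlt p hp)
    · exact (hpq ▸ hmin p hp q hqQ h).not_gt (hlt q hq)
  calc Q.card = F.card + (Q \ F).card :=
        (Finset.card_sdiff_add_card_eq_card (Finset.filter_subset _ Q)).symm.trans (add_comm _ _)
    _ ≤ _ := add_le_add (card_filter_last_le hinj) hle

end Separated

end LinearOrder

lemma abs_le_abs_intCast_mul {α : ℤ} (hα : α ≠ 0) (x : ℝ) : |x| ≤ |α * x| := by
  rw [abs_mul]
  exact le_mul_of_one_le_left (abs_nonneg x) (by exact_mod_cast Int.one_le_abs hα)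

lemma mul_neg_of_abs_add_le {x y Λ : ℝ} (h : |x + y| ≤ Λ) (hxy : Λ < |x| ∨ Λ < |y|) :
    x * y < 0 := by
  rw [abs_le] at h
  simp only [lt_abs] at hxy
  rcases hxy with (hx | hx) | (hy | hy) <;> nlinarith

section Line

variable {ι κ₁ κ₂ : Type*} [DecidableEq κ₁] [DecidableEq κ₂] {Q : Finset ι} {u v : ι → ℝ}
  {c₁ : ι → κ₁} {c₂ : ι → κ₂} {s₁ : κ₁ → ℝ} {s₂ : κ₂ → ℝ} {Λ : ℝ} {α β : ℤ}
  (hu : ∀ p ∈ Q, u p < s₁ (c₁ p)) (hv : ∀ p ∈ Q, v p < s₂ (c₂ p))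
  (hlin : ∀ p ∈ Q, ∀ q ∈ Q, |α * (u p - u q) + β * (v p - v q)| ≤ Λ)
include hu hv hlin

lemma card_le_of_oblique_line (hα : α ≠ 0) (hβ : β ≠ 0)
    (hsep : ∀ p ∈ Q, ∀ q ∈ Q, p ≠ q →
      (s₁ (c₁ p) < u q ∨ s₁ (c₁ q) < u p) ∧ Λ < |u p - u q| ∨
      (s₂ (c₂ p) < v q ∨ s₂ (c₂ q) < v p) ∧ Λ < |v p - v q|) :
    Q.card ≤ (Q.image c₁).card + (Q.image c₂).card := by
  have hneg : ∀ p ∈ Q, ∀ q ∈ Q, p ≠ q → (α * β : ℝ) * ((u p - u q) * (v p - v q)) < 0 := by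
    intro p hp q hq hpq
    rw [mul_mul_mul_comm]
    exact mul_neg_of_abs_add_le (hlin p hp q hq) <| (hsep p hp q hq hpq).imp
      (fun h ↦ h.2.trans_le (abs_le_abs_intCast_mul hα _))
      fun h ↦ h.2.trans_le (abs_le_abs_intCast_mul hβ _)
  have hinj : Set.InjOn u Q := by
    intro p hp q hq h
    by_contra hpq
    simpa [h] using hneg p hp q hq hpq
  have hsep' : ∀ p ∈ Q, ∀ q ∈ Q, p ≠ q →
      s₁ (c₁ p) < u q ∨ s₁ (c₁ q) < u p ∨ s₂ (c₂ p) < v q ∨ s₂ (c₂ q) < v p := by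
    intro p hp q hq hpq
    rw [← or_assoc]
    exact (hsep p hp q hq hpq).imp And.left And.left
  have hne : ∀ {p q}, u p < u q → p ≠ q := fun h hpq ↦ h.ne (congrArg u hpq)
  rcases lt_or_gt_of_ne (mul_ne_zero (Int.cast_ne_zero.2 hα) (Int.cast_ne_zero.2 hβ) :
    (α * β : ℝ) ≠ 0) with hs | hs
  · refine card_le_of_increasing hinj hu hv hsep' fun p hp q hq h ↦ sub_neg.1 ?_
    have := pos_of_mul_neg_right (hneg p hp q hq (hne h)) hs.le
    exact neg_of_mul_pos_right this (sub_neg.2 h).le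
  · refine card_le_of_decreasing hinj hu hv hsep' fun p hp q hq h ↦ sub_pos.1 ?_
    have := neg_of_mul_neg_right (hneg p hp q hq (hne h)) hs.le
    exact pos_of_mul_neg_right this (sub_neg.2 h).le

theorem card_le_of_tropical_line (hΛ : 0 ≤ Λ) (hαβ : α ≠ 0 ∨ β ≠ 0)
    (hsep : ∀ p ∈ Q, ∀ q ∈ Q, p ≠ q → Λ + s₁ (c₁ p) < u q ∨ Λ + s₁ (c₁ q) < u p ∨
      Λ + s₂ (c₂ p) < v q ∨ Λ + s₂ (c₂ q) < v p) :
    Q.card ≤ (Q.image c₁).card + (Q.image c₂).card := by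
  have hsep' : ∀ p ∈ Q, ∀ q ∈ Q, p ≠ q →
      (s₁ (c₁ p) < u q ∨ s₁ (c₁ q) < u p) ∧ Λ < |u p - u q| ∨
      (s₂ (c₂ p) < v q ∨ s₂ (c₂ q) < v p) ∧ Λ < |v p - v q| := by
    intro p hp q hq hpq
    have := hu p hp; have := hu q hq; have := hv p hp; have := hv q hq
    simp only [lt_abs]
    rcases hsep p hp q hq hpq with h | h | h | h
    · exact .inl ⟨.inl (by linarith), .inr (by linarith)⟩
    · exact .inl ⟨.inr (by linarith), .inl (by linarith)⟩
    · exact .inr ⟨.inl (by linarith), .inr (by linarith)⟩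
    · exact .inr ⟨.inr (by linarith), .inl (by linarith)⟩
  rcases eq_or_ne α 0 with rfl | hα
  · refine (card_le_card_image_of_lt hu fun p hp q hq hpq ↦ ?_).trans (Nat.le_add_right _ _)
    have := hlin p hp q hq
    rw [Int.cast_zero, zero_mul, zero_add] at this
    exact ((hsep' p hp q hq hpq).resolve_right fun h ↦ h.2.not_ge
      ((abs_le_abs_intCast_mul (hαβ.resolve_left (· rfl)) _).trans this)).1
  rcases eq_or_ne β 0 with rfl | hβ
  · refine (card_le_card_image_of_lt hv fun p hp q hq hpq ↦ ?_).trans (Nat.le_add_left _ _)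
    have := hlin p hp q hq
    rw [Int.cast_zero, zero_mul, add_zero] at this
    exact ((hsep' p hp q hq hpq).resolve_left fun h ↦ h.2.not_ge
      ((abs_le_abs_intCast_mul hα _).trans this)).1
  exact card_le_of_oblique_line hu hv hlin hα hβ hsep'

end Line

end TropicalLines

section Cells

open Metric
open Polynomial.Bivariate (swap)
open scoped Polynomial Polynomial.Bivariate

/-- A partition of `A` into cells, the `i`-th of which has diameter at most `2 * radius i`. -/
structure Cells (A : Finset ℂ) where
  index : ℂ → ℕ
  radius : ℕ → ℝ
  radius_pos : ∀ i, 0 < radius i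
  norm_sub_le : ∀ a ∈ A, ∀ b ∈ A, index a = index b → ‖a - b‖ ≤ 2 * radius (index a)

namespace Cells

variable {A : Finset ℂ}

/-- The radius of the cell of `a`. -/
def scale (C : Cells A) (a : ℂ) : ℝ := C.radius (C.index a)

/-- The number of nonempty cells. -/
def card (C : Cells A) : ℕ := (A.image C.index).card

lemma scale_pos (C : Cells A) (a : ℂ) : 0 < C.scale a := C.radius_pos _

end Cells

variable {A B : Finset ℂ} {C : Cells A} {D : Cells B} {K : ℝ} {Q Q' : Finset (ℂ × ℂ)} {P : ℂ[X][Y]}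
  {d : ℕ} {z w : ℂ}

/-- `Q` is a subset of `A ×ˢ B` any two points of which are, in one of the coordinates, further
apart than `K` times the smaller of their scales. -/
structure CellSeparated (C : Cells A) (D : Cells B) (K : ℝ) (Q : Finset (ℂ × ℂ)) : Prop where
  subset : Q ⊆ A ×ˢ B
  lt : ∀ p ∈ Q, ∀ q ∈ Q, p ≠ q → K * min (C.scale p.1) (C.scale q.1) < ‖p.1 - q.1‖ ∨
    K * min (D.scale p.2) (D.scale q.2) < ‖p.2 - q.2‖

namespace CellSeparated

lemma mono (h : CellSeparated C D K Q) (hQ : Q' ⊆ Q) : CellSeparated C D K Q' :=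
  ⟨hQ.trans h.subset, fun p hp q hq ↦ h.lt p (hQ hp) q (hQ hq)⟩

lemma swap (h : CellSeparated C D K Q) : CellSeparated D C K (Q.image Prod.swap) := by
  refine ⟨Finset.image_subset_iff.2 fun p hp ↦ ?_, Finset.forall_mem_image.2 fun p hp ↦
    Finset.forall_mem_image.2 fun q hq hpq ↦ (h.lt p hp q hq fun h ↦ hpq (h ▸ rfl)).symm⟩
  exact Finset.mem_product.2 (Finset.mem_product.1 (h.subset hp)).symm

lemma fst_mem (h : CellSeparated C D K Q) {p : ℂ × ℂ} (hp : p ∈ Q) : p.1 ∈ A :=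
  (Finset.mem_product.1 (h.subset hp)).1

lemma snd_mem (h : CellSeparated C D K Q) {p : ℂ × ℂ} (hp : p ∈ Q) : p.2 ∈ B :=
  (Finset.mem_product.1 (h.subset hp)).2

lemma card_image_index_fst_le (h : CellSeparated C D K Q) :
    (Q.image fun p ↦ C.index p.1).card ≤ C.card :=
  Finset.card_le_card <| Finset.image_subset_iff.2 fun _ hp ↦
    Finset.mem_image_of_mem _ (h.fst_mem hp)

lemma card_image_index_snd_le (h : CellSeparated C D K Q) :
    (Q.image fun p ↦ D.index p.2).card ≤ D.card :=
  Finset.card_le_card <| Finset.image_subset_iff.2 fun _ hp ↦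
    Finset.mem_image_of_mem _ (h.snd_mem hp)

end CellSeparated

lemma card_image_swap (Q : Finset (ℂ × ℂ)) : (Q.image Prod.swap).card = Q.card :=
  Finset.card_image_of_injective _ Prod.swap_injective

lemma card_le_of_fst_eq (hK : 2 ≤ K) (hQ : CellSeparated C D K Q) (hx : ∀ p ∈ Q, p.1 = z) :
    Q.card ≤ D.card := by
  refine Finset.card_le_card_of_injOn (fun p ↦ D.index p.2)
    (fun p hp ↦ Finset.mem_image_of_mem _ (hQ.snd_mem hp)) fun p hp q hq hpq ↦ ?_
  by_contra hne
  rcases hQ.lt p hp q hq hne with h | h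
  · rw [hx p hp, hx q hq, sub_self, norm_zero, min_self] at h
    exact h.not_ge (mul_nonneg (by linarith) (C.scale_pos z).le)
  · rw [show D.scale q.2 = D.scale p.2 from congrArg D.radius hpq.symm, min_self] at h
    refine h.not_ge ((D.norm_sub_le _ (hQ.snd_mem hp) _ (hQ.snd_mem hq) hpq).trans ?_)
    exact mul_le_mul_of_nonneg_right hK (D.scale_pos _).le

lemma card_le_of_snd_eq (hK : 2 ≤ K) (hQ : CellSeparated C D K Q) (hy : ∀ p ∈ Q, p.2 = w) :
    Q.card ≤ C.card := by
  rw [← card_image_swap Q]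
  exact card_le_of_fst_eq hK hQ.swap (Finset.forall_mem_image.2 hy)

section Branches

/- A ball is covered by boundedly many balls of a fixed smaller size. -/
lemma exists_card_le_mul_of_card_le {E : Type*} [NormedAddCommGroup E] [NormedSpace ℝ E]
    [ProperSpace E] (ι : Type*) (K : ℝ) {c : ℝ} (hc : 0 < c) :
    ∃ G : ℕ, ∀ (S : Finset ι) (u : ι → E) (o : E) (s : ℝ) (N : ℕ), 0 < s →
      (∀ i ∈ S, ‖u i - o‖ ≤ K * s) →
      (∀ T ⊆ S, (∀ i ∈ T, ∀ j ∈ T, ‖u i - u j‖ < c * s) → T.card ≤ N) → S.card ≤ N * G := by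
  obtain ⟨t, -, ht, htc⟩ := finite_cover_balls_of_compact (isCompact_closedBall (0 : E) K)
    (half_pos hc)
  refine ⟨ht.toFinset.card, fun S u o s N hs hS hN ↦ ?_⟩
  have hcover : ∀ i ∈ S, ∃ y ∈ t, ‖s⁻¹ • (u i - o) - y‖ < c / 2 := by
    intro i hi
    have := @htc (s⁻¹ • (u i - o)) (by
      rw [mem_closedBall_zero_iff, norm_smul, norm_inv, Real.norm_of_nonneg hs.le,
        inv_mul_le_iff₀ hs, mul_comm]
      exact hS i hi)
    simpa only [Set.mem_iUnion₂, mem_ball_iff_norm, exists_prop] using this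
  choose! f hft hf using hcover
  refine Finset.card_le_mul_card_image_of_maps_to (f := f)
    (fun i hi ↦ ht.mem_toFinset.2 (hft i hi)) N fun y _ ↦ hN _ (Finset.filter_subset _ _) ?_
  intro i hi j hj
  obtain ⟨hi, hiy⟩ := Finset.mem_filter.1 hi
  obtain ⟨hj, hjy⟩ := Finset.mem_filter.1 hj
  have hdist : ‖s⁻¹ • (u i - u j)‖ < c := by
    rw [show s⁻¹ • (u i - u j) = (s⁻¹ • (u i - o) - y) - (s⁻¹ • (u j - o) - y) by module]
    calc _ ≤ _ := norm_sub_le _ _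
      _ < c / 2 + c / 2 := add_lt_add (hiy ▸ hf i hi) (hjy ▸ hf j hj)
      _ = c := add_halves c
  rwa [norm_smul, norm_inv, Real.norm_of_nonneg hs.le, inv_mul_lt_iff₀ hs, mul_comm] at hdist

lemma card_le_natDegree_of_hasBranch {r : ℝ} (hr : 0 < r) (hK : 2 ≤ K) (hQ : CellSeparated C D K Q)
    (hrK : ∀ p ∈ Q, ∀ q ∈ Q, r ≤ K * min (C.scale p.1) (C.scale q.1))
    (hclose : ∀ p ∈ Q, ∀ q ∈ Q, ‖p.1 - q.1‖ < r)
    (hbranch : ∀ p ∈ Q, HasBranch P p r (2 * D.scale p.2)) : Q.card ≤ P.natDegree := by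
  by_contra! hlt
  obtain ⟨p, hp, q, hq, hpq, hle⟩ := exists_close_of_hasBranch hr hbranch hlt hclose
  rcases hQ.lt p hp q hq hpq with h | h
  · exact h.not_ge ((hclose p hp q hq).le.trans (hrK p hp q hq))
  · rw [← mul_min_of_nonneg _ _ zero_le_two] at hle
    refine h.not_ge (hle.trans ?_)
    exact mul_le_mul_of_nonneg_right hK (le_min (D.scale_pos _).le (D.scale_pos _).le)

lemma card_le_of_hasBranch {c : ℝ} (hc : 0 < c) (hc' : c ≤ 1) : ∃ G : ℕ,
    ∀ {A B : Finset ℂ} {C : Cells A} {D : Cells B} {K : ℝ} {Q : Finset (ℂ × ℂ)} (P : ℂ[X][Y]),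
    2 ≤ K → CellSeparated C D K Q →
    (∀ p ∈ Q, HasBranch P p (c * C.scale p.1) (2 * D.scale p.2)) →
    Q.card ≤ P.natDegree * G * C.card := by
  obtain ⟨G, hG⟩ := exists_card_le_mul_of_card_le (E := ℂ) (ℂ × ℂ) 2 hc
  refine ⟨G, fun {A B C D K Q} P hK hQ hbranch ↦ Finset.card_le_mul_card_image_of_maps_to
    (f := fun p ↦ C.index p.1) (fun p hp ↦ Finset.mem_image_of_mem _ (hQ.fst_mem hp)) _
    fun k _ ↦ ?_⟩
  rcases {p ∈ Q | C.index p.1 = k}.eq_empty_or_nonempty with h | ⟨o, ho⟩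
  · simp [h]
  have hmem : ∀ p ∈ {p ∈ Q | C.index p.1 = k}, p ∈ Q ∧ C.index p.1 = k :=
    fun p hp ↦ Finset.mem_filter.1 hp
  have hscale : ∀ p ∈ {p ∈ Q | C.index p.1 = k}, C.scale p.1 = C.radius k :=
    fun p hp ↦ congrArg C.radius (hmem p hp).2
  refine hG _ Prod.fst o.1 (C.radius k) _ (C.radius_pos k) (fun p hp ↦ ?_) fun T hT hclose ↦ ?_
  · rw [← hscale p hp]
    exact C.norm_sub_le _ (hQ.fst_mem (hmem p hp).1) _ (hQ.fst_mem (hmem o ho).1)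
      ((hmem p hp).2.trans (hmem o ho).2.symm)
  · refine card_le_natDegree_of_hasBranch (mul_pos hc (C.radius_pos k)) hK
      (hQ.mono (hT.trans (Finset.filter_subset _ _))) (fun p hp q hq ↦ ?_) hclose fun p hp ↦ ?_
    · rw [hscale p (hT hp), hscale q (hT hq), min_self]
      exact mul_le_mul_of_nonneg_right (by linarith) (C.radius_pos k).le
    · rw [← hscale p (hT hp)]
      exact hbranch p (hmem p (hT hp)).1

end Branches

section NearPoint

lemma exists_comparable_terms {ι E : Type*} [NormedAddCommGroup E] {M : Finset ι} {t : ι → E}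
    (h₀ : ∑ m ∈ M, t m = 0) (hne : ∃ m ∈ M, t m ≠ 0) :
    ∃ m ∈ M, ∃ n ∈ M, m ≠ n ∧ t m ≠ 0 ∧ t n ≠ 0 ∧
      |Real.log ‖t m‖ - Real.log ‖t n‖| ≤ Real.log M.card := by
  obtain ⟨k, hk, hk₀⟩ := hne
  obtain ⟨m, hm, hmax⟩ := Finset.exists_max_image M (‖t ·‖) ⟨k, hk⟩
  have hm₀ : 0 < ‖t m‖ := (norm_pos_iff.2 hk₀).trans_le (hmax k hk)
  have hsum : ‖t m‖ ≤ ∑ i ∈ M.erase m, ‖t i‖ := by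
    rw [← Finset.add_sum_erase M t hm] at h₀
    rw [eq_neg_of_add_eq_zero_left h₀, norm_neg]
    exact norm_sum_le _ _
  obtain ⟨n, hn, hnmax⟩ := Finset.exists_max_image (M.erase m) (‖t ·‖) <| by
    rw [Finset.nonempty_iff_ne_empty]
    intro h
    rw [h, Finset.sum_empty] at hsum
    exact hm₀.not_ge hsum
  have hmn : ‖t m‖ ≤ M.card * ‖t n‖ :=
    calc ‖t m‖ ≤ (M.erase m).card • ‖t n‖ := hsum.trans (Finset.sum_le_card_nsmul _ _ _ hnmax)
      _ ≤ M.card * ‖t n‖ := by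
        rw [nsmul_eq_mul]
        gcongr
        exact Finset.erase_subset _ _
  have hM : (M.card : ℝ) ≠ 0 := Nat.cast_ne_zero.2 (Finset.card_ne_zero_of_mem hk)
  have hn₀ : 0 < ‖t n‖ := pos_of_mul_pos_right (hm₀.trans_le hmn) (Nat.cast_nonneg _)
  have hnM := Finset.mem_of_mem_erase hn
  refine ⟨m, hm, n, hnM, (Finset.ne_of_mem_erase hn).symm, norm_pos_iff.1 hm₀, norm_pos_iff.1 hn₀,
    ?_⟩
  rw [abs_of_nonneg (sub_nonneg.2 (Real.log_le_log hn₀ (hmax n hnM))), sub_le_iff_le_add,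
    ← Real.log_mul hM hn₀.ne']
  exact Real.log_le_log hm₀ hmn

lemma log_norm_monomial {a x y : ℂ} {m : ℕ × ℕ} (h : a * (x ^ m.1 * y ^ m.2) ≠ 0) :
    Real.log ‖a * (x ^ m.1 * y ^ m.2)‖ =
      Real.log ‖a‖ + (m.1 * Real.log ‖x‖ + m.2 * Real.log ‖y‖) := by
  obtain ⟨ha, hx, hy⟩ : a ≠ 0 ∧ x ^ m.1 ≠ 0 ∧ y ^ m.2 ≠ 0 := by simpa only [mul_ne_zero_iff] using h
  rw [norm_mul, norm_mul, Real.log_mul (norm_ne_zero_iff.2 ha)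
    (mul_ne_zero (norm_ne_zero_iff.2 hx) (norm_ne_zero_iff.2 hy)),
    Real.log_mul (norm_ne_zero_iff.2 hx) (norm_ne_zero_iff.2 hy), norm_pow, norm_pow,
    Real.log_pow, Real.log_pow]

lemma exists_comparable_monomials {M : Finset (ℕ × ℕ)} {a : ℕ × ℕ → ℂ} (ha : ∃ m ∈ M, a m ≠ 0)
    {x y : ℂ} (hx : x ≠ 0) (hy : y ≠ 0) (h₀ : ∑ m ∈ M, a m * (x ^ m.1 * y ^ m.2) = 0) :
    ∃ m ∈ M, ∃ n ∈ M, m ≠ n ∧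
      |(Real.log ‖a m‖ + (m.1 * Real.log ‖x‖ + m.2 * Real.log ‖y‖)) -
        (Real.log ‖a n‖ + (n.1 * Real.log ‖x‖ + n.2 * Real.log ‖y‖))| ≤ Real.log M.card := by
  obtain ⟨k, hk, hk₀⟩ := ha
  obtain ⟨m, hm, n, hn, hmn, hm₀, hn₀, h⟩ := exists_comparable_terms h₀
    ⟨k, hk, mul_ne_zero hk₀ (mul_ne_zero (pow_ne_zero _ hx) (pow_ne_zero _ hy))⟩
  rw [log_norm_monomial hm₀, log_norm_monomial hn₀] at h
  exact ⟨m, hm, n, hn, hmn, h⟩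

lemma eval_add_eq_sum {R : Type*} [CommSemiring R] {p : R[X]} (hp : p.natDegree ≤ d) (z x : R) :
    p.eval (z + x) = ∑ j ∈ Finset.range (d + 1), (Polynomial.taylor z p).coeff j * x ^ j := by
  rw [add_comm, ← Polynomial.taylor_eval, Polynomial.eval_eq_sum_range' (n := d + 1)]
  exact (Polynomial.natDegree_taylor p z).trans_lt (Nat.lt_succ_of_le hp)

lemma exists_evalEval_add_eq_sum (hP : P ∈ bidegreeLE ℂ d) (z w : ℂ) :
    ∃ a : ℕ × ℕ → ℂ, ∀ x y, P.evalEval (z + x) (w + y) =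
      ∑ m ∈ Finset.range (d + 1) ×ˢ Finset.range (d + 1), a m * (x ^ m.1 * y ^ m.2) := by
  set t : ℕ → ℕ → ℂ := fun i ↦ (Polynomial.taylor z (P.coeff i)).coeff
  set t' : ℕ → ℕ → ℂ := fun i ↦ (Polynomial.taylor w (Polynomial.X ^ i)).coeff
  refine ⟨fun m ↦ ∑ i ∈ Finset.range (d + 1), t i m.1 * t' i m.2, fun x y ↦ ?_⟩
  simp only [Finset.sum_mul]
  rw [Finset.sum_comm, Polynomial.evalEval,
    Polynomial.eval_eq_sum_range' (Nat.lt_succ_of_le (mem_bidegreeLE.1 hP).1),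
    Polynomial.eval_finsetSum]
  refine Finset.sum_congr rfl fun i hi ↦ ?_
  have hi : (Polynomial.X ^ i : ℂ[X]).natDegree ≤ d :=
    (Polynomial.natDegree_X_pow_le i).trans (Nat.le_of_lt_succ (Finset.mem_range.1 hi))
  calc Polynomial.eval (z + x) (P.coeff i * Polynomial.C (w + y) ^ i)
      = (P.coeff i).eval (z + x) * (Polynomial.X ^ i).eval (w + y) := by simp
    _ = ∑ m ∈ Finset.range (d + 1) ×ˢ Finset.range (d + 1),
          t i m.1 * x ^ m.1 * (t' i m.2 * y ^ m.2) := by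
      rw [eval_add_eq_sum (natDegree_coeff_le_of_mem_bidegreeLE hP i), eval_add_eq_sum hi,
        Finset.sum_mul_sum, Finset.sum_product]
    _ = _ := Finset.sum_congr rfl fun m _ ↦ mul_mul_mul_comm _ _ _ _

lemma exists_evalEval_ne_zero {R : Type*} [CommRing R] [IsDomain R] [Infinite R] {P : R[X][Y]}
    (hP : P ≠ 0) : ∃ x y, P.evalEval x y ≠ 0 := by
  by_contra! h
  refine hP (Polynomial.ext fun n ↦ Polynomial.funext fun x ↦ ?_)
  have hx : P.map (Polynomial.evalRingHom x) = 0 :=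
    Polynomial.funext fun y ↦ by
      rw [Polynomial.map_evalRingHom_eval, h, Polynomial.eval_zero]
  simpa using congrArg (Polynomial.coeff · n) hx

end NearPoint

end Cells

section Separated

open Metric
open Polynomial.Bivariate (swap)
open scoped Polynomial Polynomial.Bivariate

variable {A B : Finset ℂ} {C : Cells A} {D : Cells B} {K Λ : ℝ} {Q : Finset (ℂ × ℂ)} {P : ℂ[X][Y]}
  {d : ℕ} {z w : ℂ}

lemma mul_lt_norm_sub_of_far {E : Type*} [SeminormedAddCommGroup E] {K s s' : ℝ} {a b z : E}
    (ha : ‖a - z‖ < s) (hb : ‖b - z‖ < s') (hab : (K + 1) * min s s' < ‖a - b‖) :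
    K * s < ‖b - z‖ ∨ K * s' < ‖a - z‖ := by
  have htri : ‖a - b‖ ≤ ‖a - z‖ + ‖b - z‖ := by
    rw [← sub_sub_sub_cancel_right a b z]
    exact norm_sub_le _ _
  rcases min_cases s s' with h | h <;> rw [h.1] at hab
  · left; linarith
  · right; linarith

/-- `Q` is contained in the union of the discs about `z` and about `w`, of the radii prescribed by
the scales. -/
def IsNear (C : Cells A) (D : Cells B) (z w : ℂ) (Q : Finset (ℂ × ℂ)) : Prop :=
  ∀ p ∈ Q, ‖p.1 - z‖ < C.scale p.1 ∧ ‖p.2 - w‖ < D.scale p.2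

lemma CellSeparated.log_lt {p q : ℂ × ℂ} (hQ : CellSeparated C D (Real.exp Λ + 1) Q)
    (hnear : IsNear C D z w Q) (hp : p ∈ Q) (hq : q ∈ Q) (hpq : p ≠ q) :
    Λ + Real.log (C.scale p.1) < Real.log ‖q.1 - z‖ ∨
    Λ + Real.log (C.scale q.1) < Real.log ‖p.1 - z‖ ∨
    Λ + Real.log (D.scale p.2) < Real.log ‖q.2 - w‖ ∨
    Λ + Real.log (D.scale q.2) < Real.log ‖p.2 - w‖ := by
  have hlog : ∀ {s t : ℝ}, 0 < s → Real.exp Λ * s < t → Λ + Real.log s < Real.log t := by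
    intro s t hs h
    calc Λ + Real.log s = Real.log (Real.exp Λ * s) := by
          rw [Real.log_mul (Real.exp_ne_zero _) hs.ne', Real.log_exp]
      _ < Real.log t := Real.log_lt_log (by positivity) h
  obtain ⟨hp₁, hp₂⟩ := hnear p hp
  obtain ⟨hq₁, hq₂⟩ := hnear q hq
  rcases hQ.lt p hp q hq hpq with h | h
  · rcases mul_lt_norm_sub_of_far hp₁ hq₁ h with h | h
    · exact .inl (hlog (C.scale_pos _) h)
    · exact .inr (.inl (hlog (C.scale_pos _) h))
  · rcases mul_lt_norm_sub_of_far hp₂ hq₂ h with h | h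
    · exact .inr (.inr (.inl (hlog (D.scale_pos _) h)))
    · exact .inr (.inr (.inr (hlog (D.scale_pos _) h)))

lemma card_le_of_comparable_monomials {b b' : ℝ} {m n : ℕ × ℕ} (hΛ : 0 ≤ Λ) (hmn : m ≠ n)
    (hQ : CellSeparated C D (Real.exp Λ + 1) Q) (hnear : IsNear C D z w Q)
    (hz : ∀ p ∈ Q, p.1 ≠ z) (hw : ∀ p ∈ Q, p.2 ≠ w)
    (h : ∀ p ∈ Q, |(b + (m.1 * Real.log ‖p.1 - z‖ + m.2 * Real.log ‖p.2 - w‖)) -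
      (b' + (n.1 * Real.log ‖p.1 - z‖ + n.2 * Real.log ‖p.2 - w‖))| ≤ Λ / 2) :
    Q.card ≤ C.card + D.card := by
  refine (card_le_of_tropical_line (Q := Q) (u := fun p ↦ Real.log ‖p.1 - z‖)
    (v := fun p ↦ Real.log ‖p.2 - w‖) (c₁ := fun p ↦ C.index p.1) (c₂ := fun p ↦ D.index p.2)
    (s₁ := fun k ↦ Real.log (C.radius k)) (s₂ := fun k ↦ Real.log (D.radius k))
    (α := (m.1 : ℤ) - n.1) (β := (m.2 : ℤ) - n.2)
    (fun p hp ↦ Real.log_lt_log (norm_sub_pos_iff.2 (hz p hp)) (hnear p hp).1)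
    (fun p hp ↦ Real.log_lt_log (norm_sub_pos_iff.2 (hw p hp)) (hnear p hp).2)
    (fun p hp q hq ↦ ?_) hΛ ?_ fun p hp q hq ↦ hQ.log_lt hnear hp hq).trans
    (add_le_add hQ.card_image_index_fst_le hQ.card_image_index_snd_le)
  · have hp' := abs_le.1 (h p hp)
    have hq' := abs_le.1 (h q hq)
    push_cast
    rw [abs_le]
    constructor <;> linarith
  · rw [sub_ne_zero, sub_ne_zero, Nat.cast_injective.ne_iff, Nat.cast_injective.ne_iff,
      ← not_and_or]
    exact fun h ↦ hmn (Prod.ext h.1 h.2)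

lemma exists_comparable_monomials_of_mem_bidegreeLE (hP₀ : P ≠ 0) (hP : P ∈ bidegreeLE ℂ d)
    (z w : ℂ) : ∃ b : ℕ × ℕ → ℝ, ∀ p : ℂ × ℂ, P.evalEval p.1 p.2 = 0 → p.1 ≠ z → p.2 ≠ w →
      ∃ m ∈ Finset.range (d + 1) ×ˢ Finset.range (d + 1),
      ∃ n ∈ Finset.range (d + 1) ×ˢ Finset.range (d + 1), m ≠ n ∧
        |(b m + (m.1 * Real.log ‖p.1 - z‖ + m.2 * Real.log ‖p.2 - w‖)) -
          (b n + (n.1 * Real.log ‖p.1 - z‖ + n.2 * Real.log ‖p.2 - w‖))| ≤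
          Real.log ((d + 1) * (d + 1) : ℕ) := by
  obtain ⟨a, ha⟩ := exists_evalEval_add_eq_sum hP z w
  have ha₀ : ∃ m ∈ Finset.range (d + 1) ×ˢ Finset.range (d + 1), a m ≠ 0 := by
    obtain ⟨x, y, hxy⟩ := exists_evalEval_ne_zero hP₀
    rw [← add_sub_cancel z x, ← add_sub_cancel w y, ha] at hxy
    obtain ⟨m, hm, hm₀⟩ := Finset.exists_ne_zero_of_sum_ne_zero hxy
    exact ⟨m, hm, left_ne_zero_of_mul hm₀⟩
  refine ⟨fun m ↦ Real.log ‖a m‖, fun p hp hz hw ↦ ?_⟩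
  have := exists_comparable_monomials ha₀ (sub_ne_zero.2 hz) (sub_ne_zero.2 hw)
    (by rw [← ha, add_sub_cancel, add_sub_cancel, hp])
  rwa [Finset.card_product, Finset.card_range] at this

lemma card_le_of_near_of_ne (hP₀ : P ≠ 0) (hP : P ∈ bidegreeLE ℂ d)
    (hQ : CellSeparated C D (Real.exp (2 * Real.log ((d + 1) * (d + 1) : ℕ)) + 1) Q)
    (hPQ : ∀ p ∈ Q, P.evalEval p.1 p.2 = 0) (hnear : IsNear C D z w Q)
    (hz : ∀ p ∈ Q, p.1 ≠ z) (hw : ∀ p ∈ Q, p.2 ≠ w) :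
    Q.card ≤ ((d + 1) * (d + 1)) ^ 2 * (C.card + D.card) := by
  obtain ⟨b, hb⟩ := exists_comparable_monomials_of_mem_bidegreeLE hP₀ hP z w
  choose! m hm n hn hmn hle using fun p hp ↦ hb p (hPQ p hp) (hz p hp) (hw p hp)
  have := Finset.card_le_mul_card_image_of_maps_to (f := fun p ↦ (m p, n p))
    (fun p hp ↦ Finset.mem_product.2 ⟨hm p hp, hn p hp⟩) (C.card + D.card) fun k _ ↦ ?_
  · rwa [Finset.card_product, Finset.card_product, Finset.card_range, ← sq, mul_comm] at this
  rcases {p ∈ Q | (m p, n p) = k}.eq_empty_or_nonempty with h | ⟨o, ho⟩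
  · rw [h, Finset.card_empty]
    exact Nat.zero_le _
  have hsub : {p ∈ Q | (m p, n p) = k} ⊆ Q := Finset.filter_subset _ _
  have hk : ∀ p ∈ {p ∈ Q | (m p, n p) = k}, m p = k.1 ∧ n p = k.2 :=
    fun p hp ↦ Prod.ext_iff.1 (Finset.mem_filter.1 hp).2
  refine card_le_of_comparable_monomials (m := k.1) (n := k.2)
    (b := b k.1) (b' := b k.2) (mul_nonneg zero_le_two (Real.log_natCast_nonneg _)) ?_
    (hQ.mono hsub) (fun p hp ↦ hnear p (hsub hp)) (fun p hp ↦ hz p (hsub hp))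
    (fun p hp ↦ hw p (hsub hp)) fun p hp ↦ ?_
  · rw [← (hk o ho).1, ← (hk o ho).2]
    exact hmn o (hsub ho)
  · rw [← (hk p hp).1, ← (hk p hp).2, mul_div_cancel_left₀ _ two_ne_zero]
    exact hle p (hsub hp)

lemma card_le_of_near (d : ℕ) : ∃ (K : ℝ) (N : ℕ), 2 ≤ K ∧
    ∀ {A B : Finset ℂ} {C : Cells A} {D : Cells B} {Q : Finset (ℂ × ℂ)} {P : ℂ[X][Y]} {z w : ℂ},
      P ≠ 0 → P ∈ bidegreeLE ℂ d → CellSeparated C D K Q → (∀ p ∈ Q, P.evalEval p.1 p.2 = 0) →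
      IsNear C D z w Q → Q.card ≤ N * (C.card + D.card) := by
  have hK : 2 ≤ Real.exp (2 * Real.log ((d + 1) * (d + 1) : ℕ)) + 1 := by
    linarith [Real.one_le_exp (mul_nonneg zero_le_two
      (Real.log_natCast_nonneg ((d + 1) * (d + 1))))]
  refine ⟨_, ((d + 1) * (d + 1)) ^ 2 + 1, hK, fun {A B C D Q P z w} hP₀ hP hQ hPQ hnear ↦ ?_⟩
  have hz : {p ∈ Q | p.1 = z}.card ≤ D.card :=
    card_le_of_fst_eq hK (hQ.mono (Finset.filter_subset _ _))
      fun p hp ↦ (Finset.mem_filter.1 hp).2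
  have hw : {p ∈ Q | p.2 = w}.card ≤ C.card :=
    card_le_of_snd_eq hK (hQ.mono (Finset.filter_subset _ _))
      fun p hp ↦ (Finset.mem_filter.1 hp).2
  have hsub : {p ∈ Q | p.1 ≠ z ∧ p.2 ≠ w} ⊆ Q := Finset.filter_subset _ _
  have hne := card_le_of_near_of_ne hP₀ hP (hQ.mono hsub) (fun p hp ↦ hPQ p (hsub hp))
    (fun p hp ↦ hnear p (hsub hp)) (fun p hp ↦ (Finset.mem_filter.1 hp).2.1)
    fun p hp ↦ (Finset.mem_filter.1 hp).2.2
  have hcover : Q ⊆ ({p ∈ Q | p.1 = z} ∪ {p ∈ Q | p.2 = w}) ∪ {p ∈ Q | p.1 ≠ z ∧ p.2 ≠ w} := by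
    intro p hp
    simp only [Finset.mem_union, Finset.mem_filter, hp, true_and]
    tauto
  have hcard := (Finset.card_le_card hcover).trans <| (Finset.card_union_le _ _).trans <|
    Nat.add_le_add_right (Finset.card_union_le _ _) _
  linarith

end Separated

section SeparatedOnCurve

open Metric
open Polynomial.Bivariate (swap)
open scoped Polynomial Polynomial.Bivariate

variable {A B : Finset ℂ} {C : Cells A} {D : Cells B} {K : ℝ} {Q : Finset (ℂ × ℂ)} {P : ℂ[X][Y]}
  {d : ℕ}

lemma card_le_of_hasBranch_or_hasBranch_swap {c : ℝ} (hc : 0 < c) (hc' : c ≤ 1) : ∃ G : ℕ,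
    ∀ {A B : Finset ℂ} {C : Cells A} {D : Cells B} {K : ℝ} {Q : Finset (ℂ × ℂ)} (P : ℂ[X][Y]),
    2 ≤ K → CellSeparated C D K Q →
    (∀ p ∈ Q, HasBranch P p (c * C.scale p.1) (2 * D.scale p.2) ∨
      HasBranch (swap P) p.swap (c * D.scale p.2) (2 * C.scale p.1)) →
    Q.card ≤ P.natDegree * G * C.card + (swap P).natDegree * G * D.card := by
  obtain ⟨G, hG⟩ := card_le_of_hasBranch hc hc'
  refine ⟨G, fun {A B C D K Q} P hK hQ hbranch ↦ ?_⟩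
  set Q₁ := {p ∈ Q | HasBranch P p (c * C.scale p.1) (2 * D.scale p.2)}
  have hfst : Q₁.card ≤ P.natDegree * G * C.card :=
    hG P hK (hQ.mono (Finset.filter_subset _ _)) fun p hp ↦ (Finset.mem_filter.1 hp).2
  have hsnd : ((Q \ Q₁).image Prod.swap).card ≤ (swap P).natDegree * G * D.card :=
    hG (swap P) hK (hQ.mono Finset.sdiff_subset).swap <| Finset.forall_mem_image.2 fun p hp ↦ by
      obtain ⟨hpQ, hp⟩ := Finset.mem_sdiff.1 hp
      exact (hbranch p hpQ).resolve_left fun h ↦ hp (Finset.mem_filter.2 ⟨hpQ, h⟩)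
  rw [card_image_swap] at hsnd
  have := Finset.card_le_card_sdiff_add_card (s := Q) (t := Q₁)
  linarith

lemma card_le_of_near_product (d : ℕ) : ∃ (K : ℝ) (N : ℕ), 2 ≤ K ∧
    ∀ {A B : Finset ℂ} {C : Cells A} {D : Cells B} {Q : Finset (ℂ × ℂ)} {P : ℂ[X][Y]}
      {Z W : Finset ℂ}, P ≠ 0 → P ∈ bidegreeLE ℂ d → CellSeparated C D K Q →
      (∀ p ∈ Q, P.evalEval p.1 p.2 = 0) →
      (∀ p ∈ Q, (∃ z ∈ Z, ‖p.1 - z‖ < C.scale p.1) ∧ ∃ w ∈ W, ‖p.2 - w‖ < D.scale p.2) →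
      Q.card ≤ N * (C.card + D.card) * (Z.card * W.card) := by
  obtain ⟨K, N, hK, hN⟩ := card_le_of_near d
  refine ⟨K, N, hK, fun {A B C D Q P Z W} hP₀ hP hQ hPQ hnear ↦ ?_⟩
  choose! z hzZ hz using fun p hp ↦ (hnear p hp).1
  choose! w hwW hw using fun p hp ↦ (hnear p hp).2
  rw [← Finset.card_product]
  refine Finset.card_le_mul_card_image_of_maps_to (f := fun p ↦ (z p, w p))
    (fun p hp ↦ Finset.mem_product.2 ⟨hzZ p hp, hwW p hp⟩) _ fun k _ ↦ ?_
  have hsub : {p ∈ Q | (z p, w p) = k} ⊆ Q := Finset.filter_subset _ _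
  refine hN (z := k.1) (w := k.2) hP₀ hP (hQ.mono hsub) (fun p hp ↦ hPQ p (hsub hp)) fun p hp ↦ ?_
  rw [← (Finset.mem_filter.1 hp).2]
  exact ⟨hz p (hsub hp), hw p (hsub hp)⟩

lemma card_le_of_natDegree_eq_zero (hK : 2 ≤ K) (hP₀ : P ≠ 0) (hP : P ∈ bidegreeLE ℂ d)
    (hdeg : P.natDegree = 0) (hQ : CellSeparated C D K Q)
    (hPQ : ∀ p ∈ Q, P.evalEval p.1 p.2 = 0) : Q.card ≤ d * D.card := by
  have hPC := Polynomial.eq_C_of_natDegree_eq_zero hdeg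
  have hq₀ : P.coeff 0 ≠ 0 := fun h ↦ hP₀ (by rw [hPC, h, Polynomial.C_0])
  have hroots : ∀ p ∈ Q, p.1 ∈ (P.coeff 0).roots.toFinset := by
    intro p hp
    have := hPQ p hp
    rwa [hPC, Polynomial.evalEval_C, ← Polynomial.IsRoot.def, ← Polynomial.mem_roots hq₀,
      ← Multiset.mem_toFinset] at this
  calc Q.card ≤ D.card * (P.coeff 0).roots.toFinset.card :=
        Finset.card_le_mul_card_image_of_maps_to hroots _ fun x _ ↦
          card_le_of_fst_eq hK (hQ.mono (Finset.filter_subset _ _))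
            fun p hp ↦ (Finset.mem_filter.1 hp).2
    _ ≤ D.card * d := Nat.mul_le_mul_left _ <| (Multiset.toFinset_card_le _).trans <|
        (Polynomial.card_roots' _).trans (natDegree_coeff_le_of_mem_bidegreeLE hP 0)
    _ = d * D.card := mul_comm _ _

lemma irreducible_swap {R : Type*} [CommSemiring R] {P : R[X][Y]} :
    Irreducible (swap P) ↔ Irreducible P :=
  MulEquiv.irreducible_iff (swap (R := R))

lemma hasBranch_or_hasBranch_swap_or_near (d : ℕ) : ∃ c : ℝ, 0 < c ∧ c ≤ 1 ∧ ∀ P : ℂ[X][Y],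
    Irreducible P → P.natDegree ≠ 0 → (swap P).natDegree ≠ 0 → P ∈ bidegreeLE ℂ d →
    ∃ Z W : Finset ℂ, Z.card ≤ d + 4 * d * d ∧ W.card ≤ d + 4 * d * d ∧
      ∀ (p : ℂ × ℂ) (s₁ s₂ : ℝ), 0 < s₁ → 0 < s₂ → P.evalEval p.1 p.2 = 0 →
      (HasBranch P p (c * s₁) (2 * s₂) ∨ HasBranch (swap P) p.swap (c * s₂) (2 * s₁)) ∨
        (∃ z ∈ Z, ‖p.1 - z‖ < s₁) ∧ ∃ w ∈ W, ‖p.2 - w‖ < s₂ := by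
  obtain ⟨c, hc₀, hc₁, hbranch⟩ := hasBranch_or_hasBranch_swap d
  refine ⟨c, hc₀, hc₁, fun P hP hdeg hdeg' hPd ↦ ?_⟩
  have hP' := irreducible_swap.2 hP
  have hPd' := swap_mem_bidegreeLE hPd
  obtain ⟨Z, hZcard, hZ⟩ := exists_finset_regularOver hP hdeg hdeg' hPd
  obtain ⟨W, hWcard, hW⟩ := exists_finset_regularOver hP' hdeg'
    (by rwa [Polynomial.Bivariate.swap_swap_apply]) hPd'
  refine ⟨Z, W, hZcard, hWcard, fun p s₁ s₂ hs₁ hs₂ hp ↦ or_iff_not_imp_right.2 fun h ↦ ?_⟩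
  rw [not_and_or] at h
  push Not at h
  rcases h with h | h
  · exact hbranch P hP hdeg hPd p _ _ hs₁ hs₂
      (fun x hx ↦ hZ x fun hxZ ↦ (h x hxZ).not_gt (mem_ball_iff_norm'.1 hx)) hp
  · have := hbranch _ hP' hdeg' hPd' p.swap _ _ hs₂ hs₁
      (fun x hx ↦ hW x fun hxW ↦ (h x hxW).not_gt (mem_ball_iff_norm'.1 hx))
      (by rwa [evalEval_swap])
    rwa [Polynomial.Bivariate.swap_swap_apply, Prod.swap_swap, or_comm] at this

lemma card_le_of_irreducible_of_natDegree_ne_zero (d : ℕ) : ∃ (K : ℝ) (N : ℕ), 2 ≤ K ∧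
    ∀ {A B : Finset ℂ} {C : Cells A} {D : Cells B} {Q : Finset (ℂ × ℂ)} {P : ℂ[X][Y]},
      Irreducible P → P.natDegree ≠ 0 → (swap P).natDegree ≠ 0 → P ∈ bidegreeLE ℂ d →
      CellSeparated C D K Q → (∀ p ∈ Q, P.evalEval p.1 p.2 = 0) →
      Q.card ≤ N * (C.card + D.card) := by
  obtain ⟨K, N, hK, hnear⟩ := card_le_of_near_product d
  obtain ⟨c, hc₀, hc₁, hbranch⟩ := hasBranch_or_hasBranch_swap_or_near d
  obtain ⟨G, hG⟩ := card_le_of_hasBranch_or_hasBranch_swap hc₀ hc₁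
  set e := d + 4 * d * d
  refine ⟨K, d * G + N * (e * e), hK, fun {A B C D Q P} hP hdeg hdeg' hPd hQ hPQ ↦ ?_⟩
  obtain ⟨Z, W, hZcard, hWcard, hZW⟩ := hbranch P hP hdeg hdeg' hPd
  set R := {p ∈ Q | (∃ z ∈ Z, ‖p.1 - z‖ < C.scale p.1) ∧ ∃ w ∈ W, ‖p.2 - w‖ < D.scale p.2}
  have hRQ : R ⊆ Q := Finset.filter_subset _ _
  have hRcard := hnear hP.ne_zero hPd (hQ.mono hRQ) (fun p hp ↦ hPQ p (hRQ hp))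
    fun p hp ↦ (Finset.mem_filter.1 hp).2
  have hQRcard := hG P hK (hQ.mono (Finset.sdiff_subset (t := R))) fun p hp ↦ by
    obtain ⟨hpQ, hpR⟩ := Finset.mem_sdiff.1 hp
    exact (hZW p _ _ (C.scale_pos _) (D.scale_pos _) (hPQ p hpQ)).resolve_right
      fun h ↦ hpR (Finset.mem_filter.2 ⟨hpQ, h⟩)
  calc Q.card ≤ (Q \ R).card + R.card := Finset.card_le_card_sdiff_add_card
    _ ≤ (P.natDegree * G * C.card + (swap P).natDegree * G * D.card) +
        N * (C.card + D.card) * (Z.card * W.card) := add_le_add hQRcard hRcard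
    _ ≤ (d * G * C.card + d * G * D.card) + N * (C.card + D.card) * (e * e) := by
      have := (mem_bidegreeLE.1 hPd).1
      have := (mem_bidegreeLE.1 hPd).2
      gcongr
    _ = _ := by ring

lemma card_le_of_irreducible (d : ℕ) : ∃ (K : ℝ) (N : ℕ), 2 ≤ K ∧
    ∀ {A B : Finset ℂ} {C : Cells A} {D : Cells B} {Q : Finset (ℂ × ℂ)} {P : ℂ[X][Y]},
      Irreducible P → P ∈ bidegreeLE ℂ d → CellSeparated C D K Q →
      (∀ p ∈ Q, P.evalEval p.1 p.2 = 0) → Q.card ≤ N * (C.card + D.card) := by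
  obtain ⟨K, N, hK, hN⟩ := card_le_of_irreducible_of_natDegree_ne_zero d
  refine ⟨K, d + N, hK, fun {A B C D Q P} hP hPd hQ hPQ ↦ ?_⟩
  rcases eq_or_ne P.natDegree 0 with hdeg | hdeg
  · have := card_le_of_natDegree_eq_zero hK hP.ne_zero hPd hdeg hQ hPQ
    exact this.trans (Nat.mul_le_mul (Nat.le_add_right _ _) (Nat.le_add_left _ _))
  rcases eq_or_ne (swap P).natDegree 0 with hdeg' | hdeg'
  · have := card_le_of_natDegree_eq_zero hK (irreducible_swap.2 hP).ne_zero
      (swap_mem_bidegreeLE hPd) hdeg' hQ.swap <| Finset.forall_mem_image.2 fun p hp ↦ by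
        rw [evalEval_swap]
        exact hPQ p hp
    rw [card_image_swap] at this
    exact this.trans (Nat.mul_le_mul (Nat.le_add_right _ _) (Nat.le_add_right _ _))
  · exact (hN hP hdeg hdeg' hPd hQ hPQ).trans (Nat.mul_le_mul_right _ (Nat.le_add_left _ _))

lemma one_le_natDegree_add_of_irreducible {F : Type*} [Field F] {P : F[X][Y]}
    (hP : Irreducible P) : 1 ≤ P.natDegree + (swap P).natDegree := by
  by_contra! h
  have hPd : P ∈ bidegreeLE F 0 := mem_bidegreeLE.2 ⟨by omega, by omega⟩
  obtain ⟨a, rfl⟩ : ∃ a, P = Polynomial.C (Polynomial.C a) :=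
    ⟨_, by
      rw [← Polynomial.eq_C_of_natDegree_le_zero (natDegree_coeff_le_of_mem_bidegreeLE hPd 0)]
      exact Polynomial.eq_C_of_natDegree_le_zero hPd.1⟩
  have ha : a ≠ 0 := fun ha ↦ hP.ne_zero (by rw [ha, Polynomial.C_0, Polynomial.C_0])
  exact hP.not_isUnit ((ha.isUnit.map Polynomial.C).map Polynomial.C)

lemma evalEval_ne_zero_of_isUnit {R : Type*} [CommRing R] [Nontrivial R] {P : R[X][Y]}
    (hP : IsUnit P) (x y : R) : P.evalEval x y ≠ 0 :=
  (hP.map (Polynomial.evalEvalRingHom x y)).ne_zero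

/- The bound for irreducible curves is weighted by the degrees, which add up over the factors. -/
lemma card_le_of_irreducible_factors {N : ℕ}
    (h : ∀ P ∈ bidegreeLE ℂ d, Irreducible P → ∀ Q, CellSeparated C D K Q →
      (∀ p ∈ Q, P.evalEval p.1 p.2 = 0) → Q.card ≤ N)
    (hP₀ : P ≠ 0) (hP : P ∈ bidegreeLE ℂ d) (hQ : CellSeparated C D K Q)
    (hPQ : ∀ p ∈ Q, P.evalEval p.1 p.2 = 0) :
    Q.card ≤ N * (P.natDegree + (swap P).natDegree) := by
  induction P using WfDvdMonoid.induction_on_irreducible generalizing Q with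
  | zero => exact absurd rfl hP₀
  | unit u hu =>
    rw [Finset.eq_empty_of_forall_notMem fun p hp ↦ evalEval_ne_zero_of_isUnit hu _ _ (hPQ p hp),
      Finset.card_empty]
    exact Nat.zero_le _
  | mul a i ha hi ih =>
    have hdeg : (i * a).natDegree = i.natDegree + a.natDegree :=
      Polynomial.natDegree_mul hi.ne_zero ha
    have hdeg' : (swap (i * a)).natDegree = (swap i).natDegree + (swap a).natDegree := by
      rw [map_mul, Polynomial.natDegree_mul (irreducible_swap.2 hi).ne_zero
        ((map_ne_zero_iff _ (swap (R := ℂ)).injective).2 ha)]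
    rw [mem_bidegreeLE, hdeg, hdeg'] at hP
    have hicard : {p ∈ Q | i.evalEval p.1 p.2 = 0}.card ≤ N :=
      h i ⟨by omega, by omega⟩ hi _ (hQ.mono (Finset.filter_subset _ _))
        fun p hp ↦ (Finset.mem_filter.1 hp).2
    have hacard := ih ha ⟨by omega, by omega⟩ (hQ.mono (Finset.filter_subset _ _))
      (Q := {p ∈ Q | a.evalEval p.1 p.2 = 0}) fun p hp ↦ (Finset.mem_filter.1 hp).2
    have hcover : Q ⊆ {p ∈ Q | i.evalEval p.1 p.2 = 0} ∪ {p ∈ Q | a.evalEval p.1 p.2 = 0} := by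
      intro p hp
      have := hPQ p hp
      rw [Polynomial.evalEval_mul, mul_eq_zero] at this
      simpa only [Finset.mem_union, Finset.mem_filter, hp, true_and] using this
    calc Q.card ≤ N * 1 + N * (a.natDegree + (swap a).natDegree) := by
          rw [mul_one]
          exact (Finset.card_le_card hcover).trans <|
            (Finset.card_union_le _ _).trans (add_le_add hicard hacard)
      _ ≤ N * (i.natDegree + (swap i).natDegree) + N * (a.natDegree + (swap a).natDegree) := by
        gcongr
        exact one_le_natDegree_add_of_irreducible hi
      _ = _ := by rw [hdeg, hdeg']; ring

theorem card_le_of_cellSeparated (d : ℕ) : ∃ (K : ℝ) (N : ℕ),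
    ∀ {A B : Finset ℂ} {C : Cells A} {D : Cells B} {Q : Finset (ℂ × ℂ)} {P : ℂ[X][Y]},
      P ≠ 0 → P ∈ bidegreeLE ℂ d → CellSeparated C D K Q →
      (∀ p ∈ Q, P.evalEval p.1 p.2 = 0) → Q.card ≤ N * (C.card + D.card) := by
  obtain ⟨K, N, -, hN⟩ := card_le_of_irreducible d
  refine ⟨K, N * (d + d), fun {A B C D Q P} hP₀ hP hQ hPQ ↦ ?_⟩
  calc Q.card ≤ N * (C.card + D.card) * (P.natDegree + (swap P).natDegree) :=
        card_le_of_irreducible_factors (fun P hP hirr Q hQ hPQ ↦ hN hirr hP hQ hPQ) hP₀ hP hQ hPQ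
    _ ≤ N * (C.card + D.card) * (d + d) := by
      have := (mem_bidegreeLE.1 hP).1
      have := (mem_bidegreeLE.1 hP).2
      gcongr
    _ = N * (d + d) * (C.card + D.card) := by ring

end SeparatedOnCurve

section Carving

lemma exists_minimal_disc {E : Type*} [NormedAddCommGroup E] {T : ℕ} (hT : 2 ≤ T) {A : Finset E}
    (hA : T ≤ A.card) : ∃ c : E, ∃ r : ℝ, 0 < r ∧ T ≤ {b ∈ A | ‖c - b‖ ≤ r}.card ∧
      ∀ a ∈ A, {b ∈ A | ‖a - b‖ < r}.card < T := by
  obtain ⟨M, hM⟩ : ∃ M, M = {x ∈ A ×ˢ A | T ≤ {b ∈ A | ‖x.1 - b‖ ≤ ‖x.1 - x.2‖}.card} := ⟨_, rfl⟩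
  have hfar : ∀ a ∈ A, ∀ S ⊆ A, T ≤ S.card → ∃ b ∈ S, (a, b) ∈ M := by
    intro a ha S hS hTS
    obtain ⟨b, hb, hbmax⟩ := Finset.exists_max_image S (‖a - ·‖) (Finset.card_pos.1 (by omega))
    rw [hM]
    refine ⟨b, hb, Finset.mem_filter.2 ⟨Finset.mk_mem_product ha (hS hb), hTS.trans ?_⟩⟩
    exact Finset.card_le_card fun x hx ↦ Finset.mem_filter.2 ⟨hS hx, hbmax x hx⟩
  obtain ⟨a₀, ha₀⟩ : A.Nonempty := Finset.card_pos.1 (by omega)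
  obtain ⟨b₀, -, hb₀⟩ := hfar a₀ ha₀ A subset_rfl hA
  obtain ⟨x, hx, hxmin⟩ := Finset.exists_min_image M (fun x ↦ ‖x.1 - x.2‖) ⟨_, hb₀⟩
  rw [hM] at hx
  have hxT := (Finset.mem_filter.1 hx).2
  refine ⟨x.1, ‖x.1 - x.2‖, (norm_nonneg _).lt_of_ne fun h₀ ↦ ?_, hxT, fun a ha ↦ ?_⟩
  · have hone : {b ∈ A | ‖x.1 - b‖ ≤ ‖x.1 - x.2‖}.card ≤ 1 := by
      refine Finset.card_le_one_iff_subset_singleton.2 ⟨x.1, fun b hb ↦ Finset.mem_singleton.2 ?_⟩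
      have := (Finset.mem_filter.1 hb).2
      rw [← h₀, norm_le_zero_iff, sub_eq_zero] at this
      exact this.symm
    omega
  · by_contra! hge
    obtain ⟨b, hb, hab⟩ := hfar a ha _ (Finset.filter_subset _ _) hge
    exact (hxmin _ hab).not_gt (Finset.mem_filter.1 hb).2

namespace Cells

variable {A S : Finset ℂ} {T : ℕ}

/-- For no `r` are there `T` points of scale at least `r` within distance `r` of one of them. -/
def Sparse (C : Cells A) (T : ℕ) : Prop :=
  ∀ r : ℝ, ∀ a ∈ A, r ≤ C.scale a → {b ∈ A | r ≤ C.scale b ∧ ‖a - b‖ < r}.card < T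

/-- The partition of `A` into a single cell. -/
def single (A : Finset ℂ) : Cells A where
  index _ := 0
  radius _ := 1 + ∑ a ∈ A, ‖a‖
  radius_pos _ := by positivity
  norm_sub_le a ha b hb _ := by
    have ha' := Finset.single_le_sum (f := (‖·‖)) (fun i _ ↦ norm_nonneg i) ha
    have hb' := Finset.single_le_sum (f := (‖·‖)) (fun i _ ↦ norm_nonneg i) hb
    linarith [_root_.norm_sub_le a b]

lemma card_single_le (A : Finset ℂ) : (single A).card ≤ 1 :=
  (Finset.card_le_card (Finset.image_subset_iff.2 fun _ _ ↦ Finset.mem_singleton_self 0)).trans_eq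
    (Finset.card_singleton 0)

variable (C : Cells (A \ S)) {c : ℂ} {r : ℝ} (hr : 0 < r) (hS : ∀ a ∈ S, ‖c - a‖ ≤ r)

/-- Add a subset `S` of the disc of radius `r` about `c` as a new cell. -/
def consDisc : Cells A where
  index x := if x ∈ S then 0 else C.index x + 1
  radius
    | 0 => r
    | i + 1 => C.radius i
  radius_pos
    | 0 => hr
    | i + 1 => C.radius_pos i
  norm_sub_le a ha b hb hab := by
    by_cases haS : a ∈ S <;> by_cases hbS : b ∈ S <;>
      simp only [haS, hbS, if_true, if_false, Nat.add_right_cancel_iff] at hab ⊢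
    · calc ‖a - b‖ = ‖(c - b) - (c - a)‖ := by rw [sub_sub_sub_cancel_left]
        _ ≤ ‖c - b‖ + ‖c - a‖ := _root_.norm_sub_le _ _
        _ ≤ r + r := add_le_add (hS b hbS) (hS a haS)
        _ = 2 * r := (two_mul r).symm
    · omega
    · omega
    · exact C.norm_sub_le a (Finset.mem_sdiff.2 ⟨ha, haS⟩) b (Finset.mem_sdiff.2 ⟨hb, hbS⟩) hab

lemma scale_consDisc (x : ℂ) :
    (C.consDisc hr hS).scale x = if x ∈ S then r else C.scale x := by
  by_cases h : x ∈ S <;> simp [scale, consDisc, h]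

lemma card_consDisc_le : (C.consDisc hr hS).card ≤ C.card + 1 := by
  have hsub : A.image (C.consDisc hr hS).index ⊆
      insert 0 (((A \ S).image C.index).image (· + 1)) := by
    refine Finset.image_subset_iff.2 fun x hx ↦ ?_
    by_cases h : x ∈ S
    · simp [consDisc, h]
    · simp only [consDisc, h, if_false]
      exact Finset.mem_insert_of_mem <| Finset.mem_image_of_mem _ <|
        Finset.mem_image_of_mem _ (Finset.mem_sdiff.2 ⟨hx, h⟩)
  exact (Finset.card_le_card hsub).trans <| (Finset.card_insert_le _ _).trans <|
    Nat.add_le_add_right Finset.card_image_le _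

lemma Sparse.consDisc {C : Cells (A \ S)} (hC : C.Sparse T)
    (hT : ∀ a ∈ A, {b ∈ A | ‖a - b‖ < r}.card < T) : (C.consDisc hr hS).Sparse T := by
  intro t a ha hta
  simp only [scale_consDisc] at hta ⊢
  rcases le_or_gt t r with htr | htr
  · refine (Finset.card_le_card fun b hb ↦ ?_).trans_lt (hT a ha)
    obtain ⟨hb, -, hab⟩ := Finset.mem_filter.1 hb
    exact Finset.mem_filter.2 ⟨hb, hab.trans_le htr⟩
  · have hout : ∀ b, t ≤ (if b ∈ S then r else C.scale b) → b ∉ S ∧ t ≤ C.scale b := by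
      intro b hb
      split_ifs at hb with h
      · exact absurd hb htr.not_ge
      · exact ⟨h, hb⟩
    obtain ⟨haS, hta⟩ := hout a hta
    refine (Finset.card_le_card fun b hb ↦ ?_).trans_lt
      (hC t a (Finset.mem_sdiff.2 ⟨ha, haS⟩) hta)
    obtain ⟨hb, htb, hab⟩ := Finset.mem_filter.1 hb
    obtain ⟨hbS, htb⟩ := hout b htb
    exact Finset.mem_filter.2 ⟨Finset.mem_sdiff.2 ⟨hb, hbS⟩, htb, hab⟩

/- Carve off the points in a smallest disc containing at least `T` points, and repeat. -/
lemma exists_sparse (hT : 2 ≤ T) (A : Finset ℂ) :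
    ∃ C : Cells A, C.card * T ≤ A.card + T ∧ C.Sparse T := by
  induction A using Finset.strongInduction with
  | H A ih =>
  rcases lt_or_ge A.card T with hlt | hge
  · refine ⟨single A, ?_, fun r a _ _ ↦ (Finset.card_filter_le _ _).trans_lt hlt⟩
    exact (Nat.mul_le_mul_right T (card_single_le A)).trans (by omega)
  obtain ⟨c, r, hr, hcard, hmin⟩ := exists_minimal_disc hT hge
  set S := {b ∈ A | ‖c - b‖ ≤ r}
  have hSA : S ⊆ A := Finset.filter_subset _ _
  obtain ⟨C, hC, hsparse⟩ := ih _ (Finset.sdiff_ssubset hSA (Finset.card_pos.1 (by omega)))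
  refine ⟨C.consDisc hr fun a ha ↦ (Finset.mem_filter.1 ha).2, ?_, hsparse.consDisc hr _ hmin⟩
  have hsum : (A \ S).card + S.card = A.card := Finset.card_sdiff_add_card_eq_card hSA
  calc _ ≤ (C.card + 1) * T := Nat.mul_le_mul_right _ (C.card_consDisc_le hr _)
    _ = C.card * T + T := Nat.succ_mul _ _
    _ ≤ A.card + T := by omega

lemma exists_card_filter_scale_le_of_sparse (K : ℝ) : ∃ G : ℕ, ∀ {A : Finset ℂ} {C : Cells A}
    {T : ℕ}, C.Sparse T → ∀ a : ℂ,
      {b ∈ A | C.scale a ≤ C.scale b ∧ ‖a - b‖ ≤ K * C.scale a}.card ≤ T * G := by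
  obtain ⟨G, hG⟩ := exists_card_le_mul_of_card_le (E := ℂ) ℂ K one_pos
  refine ⟨G, fun {A C T} hC a ↦ hG _ id a _ T (C.scale_pos a) (fun b hb ↦ ?_) fun T' hT' h ↦ ?_⟩
  · rw [id, norm_sub_rev]
    exact (Finset.mem_filter.1 hb).2.2
  rcases T'.eq_empty_or_nonempty with rfl | ⟨o, ho⟩
  · exact Nat.zero_le _
  obtain ⟨hoA, hao, -⟩ := Finset.mem_filter.1 (hT' ho)
  refine ((Finset.card_le_card fun b hb ↦ ?_).trans_lt (hC _ o hoA hao)).le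
  obtain ⟨hbA, hab, -⟩ := Finset.mem_filter.1 (hT' hb)
  exact Finset.mem_filter.2 ⟨hbA, hab, (h o ho b hb).trans_eq (one_mul _)⟩

lemma exists_card_close_pairs_le (K : ℝ) : ∃ N : ℕ, ∀ {A : Finset ℂ} {C : Cells A} {T : ℕ},
    C.Sparse T →
    {x ∈ A ×ˢ A | ‖x.1 - x.2‖ ≤ K * min (C.scale x.1) (C.scale x.2)}.card ≤ N * T * A.card := by
  obtain ⟨G, hG⟩ := exists_card_filter_scale_le_of_sparse K
  refine ⟨2 * G, fun {A C T} hC ↦ ?_⟩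
  set E : ℂ → ℂ → Prop := fun a b ↦ C.scale a ≤ C.scale b ∧ ‖a - b‖ ≤ K * C.scale a
  have hsum : ∑ a ∈ A, {b ∈ A | E a b}.card ≤ A.card * (T * G) :=
    Finset.sum_le_card_nsmul _ _ _ fun a _ ↦ hG hC a
  have hfst : {x ∈ A ×ˢ A | E x.1 x.2}.card ≤ A.card * (T * G) := by
    rwa [Finset.card_filter, Finset.sum_product, Finset.sum_congr rfl fun a _ ↦
      (Finset.card_filter (E a) A).symm]
  have hsnd : {x ∈ A ×ˢ A | E x.2 x.1}.card ≤ A.card * (T * G) := by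
    rwa [Finset.card_filter, Finset.sum_product_right, Finset.sum_congr rfl fun a _ ↦
      (Finset.card_filter (E a) A).symm]
  have hcover : {x ∈ A ×ˢ A | ‖x.1 - x.2‖ ≤ K * min (C.scale x.1) (C.scale x.2)} ⊆
      {x ∈ A ×ˢ A | E x.1 x.2} ∪ {x ∈ A ×ˢ A | E x.2 x.1} := by
    intro x hx
    obtain ⟨hx, hx'⟩ := Finset.mem_filter.1 hx
    rcases le_total (C.scale x.1) (C.scale x.2) with h | h
    · rw [min_eq_left h] at hx'
      exact Finset.mem_union_left _ (Finset.mem_filter.2 ⟨hx, h, hx'⟩)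
    · rw [min_eq_right h, norm_sub_rev] at hx'
      exact Finset.mem_union_right _ (Finset.mem_filter.2 ⟨hx, h, hx'⟩)
  calc _ ≤ _ := (Finset.card_le_card hcover).trans (Finset.card_union_le _ _)
    _ ≤ A.card * (T * G) + A.card * (T * G) := add_le_add hfst hsnd
    _ = 2 * G * T * A.card := by ring

end Cells

end Carving

section Incidences

open scoped Polynomial Polynomial.Bivariate

lemma exists_independent_subset {ι : Type*} (E : ι → ι → Prop) (S : Finset ι) :
    ∃ Q ⊆ S, (∀ p ∈ Q, ∀ q ∈ Q, ¬ E p q) ∧ S.card ≤ Q.card + {x ∈ S ×ˢ S | E x.1 x.2}.card := by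
  induction S using Finset.strongInduction with
  | H S ih =>
  by_cases h : ∀ p ∈ S, ∀ q ∈ S, ¬ E p q
  · exact ⟨S, subset_rfl, h, Nat.le_add_right _ _⟩
  push Not at h
  obtain ⟨p, hp, q, hq, hpq⟩ := h
  obtain ⟨Q, hQ, hind, hcard⟩ := ih (S.erase p) (Finset.erase_ssubset hp)
  refine ⟨Q, hQ.trans (Finset.erase_subset _ _), hind, ?_⟩
  have hlt : {x ∈ S.erase p ×ˢ S.erase p | E x.1 x.2}.card < {x ∈ S ×ˢ S | E x.1 x.2}.card := by
    have hsub : S.erase p ×ˢ S.erase p ⊆ S ×ˢ S :=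
      Finset.product_subset_product (Finset.erase_subset _ _) (Finset.erase_subset _ _)
    refine Finset.card_lt_card ((Finset.ssubset_iff_of_subset
      (Finset.filter_subset_filter _ hsub)).2 ⟨(p, q), ?_, fun hx ↦ ?_⟩)
    · exact Finset.mem_filter.2 ⟨Finset.mk_mem_product hp hq, hpq⟩
    · exact Finset.ne_of_mem_erase (Finset.mem_product.1 (Finset.mem_filter.1 hx).1).1 rfl
  have := Finset.card_erase_add_one hp
  omega

lemma exists_coloring_of_degree_le {ι : Type*} [DecidableEq ι] {E : ι → ι → Prop}
    [∀ p q, Decidable (E p q)] (hE : ∀ p q, E p q → E q p) {l : ℕ} {S : Finset ι}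
    (hdeg : ∀ p ∈ S, {q ∈ S.erase p | E p q}.card ≤ l) :
    ∃ f : ι → Fin (l + 1), ∀ p ∈ S, ∀ q ∈ S, p ≠ q → f p = f q → ¬ E p q := by
  induction S using Finset.induction_on with
  | empty => exact ⟨fun _ ↦ 0, fun p hp ↦ absurd hp (Finset.notMem_empty p)⟩
  | insert a S ha ih =>
    obtain ⟨f, hf⟩ := ih fun p hp ↦ (Finset.card_le_card <| Finset.filter_subset_filter _ <|
      Finset.erase_subset_erase _ (Finset.subset_insert a S)).trans
        (hdeg p (Finset.mem_insert_of_mem hp))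
    obtain ⟨c, -, hc⟩ : ∃ c ∈ Finset.univ, c ∉ {q ∈ S | E a q}.image f := by
      refine Finset.exists_mem_notMem_of_card_lt_card (Finset.card_image_le.trans_lt ?_)
      have := hdeg a (Finset.mem_insert_self a S)
      rw [Finset.erase_insert ha] at this
      rw [Finset.card_univ, Fintype.card_fin]
      omega
    have hca : ∀ q ∈ S, f q = c → ¬ E a q := fun q hq hqc haq ↦
      hc (Finset.mem_image.2 ⟨q, Finset.mem_filter.2 ⟨hq, haq⟩, hqc⟩)
    have hne : ∀ q ∈ S, q ≠ a := fun q hq ↦ ne_of_mem_of_not_mem hq ha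
    refine ⟨Function.update f a c, fun p hp q hq hpq hfpq ↦ ?_⟩
    rcases Finset.mem_insert.1 hp with rfl | hpS <;>
      rcases Finset.mem_insert.1 hq with rfl | hqS
    · exact absurd rfl hpq
    · rw [Function.update_self, Function.update_of_ne (hne q hqS)] at hfpq
      exact hca q hqS hfpq.symm
    · rw [Function.update_self, Function.update_of_ne (hne p hpS)] at hfpq
      exact fun h ↦ hca p hpS hfpq (hE _ _ h)
    · rw [Function.update_of_ne (hne p hpS), Function.update_of_ne (hne q hqS)] at hfpq
      exact hf p hpS q hqS hpq hfpq

lemma sum_map_card_filter {α β : Type*} (Γ : Multiset α) (D : Finset β) (R : α → β → Prop)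
    [∀ γ x, Decidable (R γ x)] :
    (Γ.map fun γ ↦ {x ∈ D | R γ x}.card).sum = ∑ x ∈ D, (Γ.filter fun γ ↦ R γ x).card := by
  simp only [Finset.card_filter, ← Multiset.countP_eq_card_filter]
  induction Γ using Multiset.induction_on with
  | empty => simp
  | cons γ Γ ih =>
    simp only [Multiset.map_cons, Multiset.sum_cons, ih, Multiset.countP_cons,
      Finset.sum_add_distrib, add_comm]

lemma sum_map_le_of_forall_le_add {α : Type*} {Γ : Multiset α} {f g : α → ℕ} {n : ℕ}
    (h : ∀ γ ∈ Γ, f γ ≤ n + g γ) : (Γ.map f).sum ≤ Γ.card * n + (Γ.map g).sum := by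
  refine (Multiset.sum_map_le_sum_map f (fun γ ↦ n + g γ) h).trans_eq ?_
  rw [Multiset.sum_map_add, Multiset.map_const', Multiset.sum_replicate, smul_eq_mul]

/-- The number of curves of `Γ`, counted with multiplicity, through both `p` and `q`. -/
def codegree (Γ : Multiset (Set (ℂ × ℂ))) (p q : ℂ × ℂ) : ℕ :=
  (Γ.filter fun γ ↦ p ∈ γ ∧ q ∈ γ).card

variable {S : Finset (ℂ × ℂ)} {Γ : Multiset (Set (ℂ × ℂ))} {A B : Finset ℂ} {d n mu : ℕ}

lemma codegree_comm (p q : ℂ × ℂ) : codegree Γ p q = codegree Γ q p := by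
  simp only [codegree, and_comm]

lemma incidences_eq_sum_fiberwise {κ : Type*} [DecidableEq κ] {f : ℂ × ℂ → κ} {t : Finset κ}
    (hf : ∀ p ∈ S, f p ∈ t) : incidences S Γ = ∑ a ∈ t, incidences {p ∈ S | f p = a} Γ := by
  simp only [incidences, sum_map_card_filter]
  exact (Finset.sum_fiberwise_of_maps_to hf _).symm

lemma incidences_le_of_independent (E : ℂ × ℂ → ℂ × ℂ → Prop) [∀ p q, Decidable (E p q)]
    (hS : (S : Set (ℂ × ℂ)).Pairwise fun p q ↦ codegree Γ p q ≤ mu)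
    (hn : ∀ γ ∈ Γ, ∀ Q ⊆ S, (∀ p ∈ Q, p ∈ γ) → (∀ p ∈ Q, ∀ q ∈ Q, p ≠ q → ¬ E p q) →
      Q.card ≤ n) :
    incidences S Γ ≤ Γ.card * n + {x ∈ S ×ˢ S | E x.1 x.2}.card * mu := by
  set D := {x ∈ S ×ˢ S | x.1 ≠ x.2 ∧ E x.1 x.2}
  have hcurve : ∀ γ ∈ Γ, {p ∈ S | p ∈ γ}.card ≤ n + {x ∈ D | x.1 ∈ γ ∧ x.2 ∈ γ}.card := by
    intro γ hγ
    obtain ⟨Q, hQ, hQE, hcard⟩ :=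
      exists_independent_subset (fun p q ↦ p ≠ q ∧ E p q) {p ∈ S | p ∈ γ}
    refine hcard.trans (add_le_add (hn γ hγ Q (hQ.trans (Finset.filter_subset _ _))
      (fun p hp ↦ (Finset.mem_filter.1 (hQ hp)).2)
      fun p hp q hq hpq h ↦ hQE p hp q hq ⟨hpq, h⟩) (Finset.card_le_card fun x hx ↦ ?_))
    simp only [Finset.mem_filter, Finset.mem_product, D] at hx ⊢
    tauto
  have hcodegree : ∀ x ∈ D, (Γ.filter fun γ ↦ x.1 ∈ γ ∧ x.2 ∈ γ).card ≤ mu := by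
    intro x hx
    obtain ⟨hx, hne, -⟩ := Finset.mem_filter.1 hx
    exact hS (Finset.mem_product.1 hx).1 (Finset.mem_product.1 hx).2 hne
  calc incidences S Γ
      ≤ Γ.card * n + (Γ.map fun γ ↦ {x ∈ D | x.1 ∈ γ ∧ x.2 ∈ γ}.card).sum :=
        sum_map_le_of_forall_le_add hcurve
    _ = Γ.card * n + ∑ x ∈ D, (Γ.filter fun γ ↦ x.1 ∈ γ ∧ x.2 ∈ γ).card := by
      rw [sum_map_card_filter Γ D fun γ x ↦ x.1 ∈ γ ∧ x.2 ∈ γ]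
    _ ≤ Γ.card * n + D.card * mu :=
      Nat.add_le_add_left (Finset.sum_le_card_nsmul _ _ _ hcodegree) _
    _ ≤ Γ.card * n + {x ∈ S ×ˢ S | E x.1 x.2}.card * mu := by
      exact Nat.add_le_add_left (Nat.mul_le_mul_right _ (Finset.card_le_card <|
        Finset.monotone_filter_right _ fun _ _ h ↦ h.2)) _

lemma incidences_le_card_add_sq (hS : (S : Set (ℂ × ℂ)).Pairwise fun p q ↦ codegree Γ p q ≤ mu) :
    incidences S Γ ≤ Γ.card + S.card ^ 2 * mu := by
  refine (incidences_le_of_independent (n := 1) (fun _ _ ↦ True) hS fun γ _ Q _ _ hQ ↦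
    Finset.card_le_one.2 fun p hp q hq ↦ ?_).trans_eq ?_
  · by_contra hne
    exact hQ p hp q hq hne trivial
  · rw [Finset.filter_true, Finset.card_product, mul_one, sq]

lemma incidences_le_of_subset_or_card_le {F : Finset (ℂ × ℂ)}
    (hF : (F : Set (ℂ × ℂ)).Pairwise fun p q ↦ codegree Γ p q ≤ mu)
    (hΓ : ∀ γ ∈ Γ, (∀ p ∈ F, p ∈ γ) ∨ {p ∈ F | p ∈ γ}.card ≤ d) :
    incidences F Γ ≤ Γ.card * (d + 1) + F.card * mu := by
  rcases le_or_gt F.card 1 with hcard | hcard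
  · refine (Multiset.sum_map_le_sum_map _ (fun _ ↦ d + 1) fun γ _ ↦ ?_).trans ?_
    · exact (Finset.card_filter_le _ _).trans (by omega)
    · rw [Multiset.map_const', Multiset.sum_replicate, smul_eq_mul]
      exact Nat.le_add_right _ _
  obtain ⟨p, hp, q, hq, hne⟩ := Finset.one_lt_card.1 hcard
  have hcurve : ∀ γ ∈ Γ, {x ∈ F | x ∈ γ}.card ≤ d + (F.filter fun _ ↦ p ∈ γ ∧ q ∈ γ).card := by
    intro γ hγ
    rcases hΓ γ hγ with h | h
    · rw [Finset.filter_true_of_mem h, Finset.filter_true_of_mem fun _ _ ↦ ⟨h p hp, h q hq⟩]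
      exact Nat.le_add_left _ _
    · exact h.trans (Nat.le_add_right _ _)
  calc incidences F Γ
      ≤ Γ.card * d + (Γ.map fun γ ↦ (F.filter fun _ ↦ p ∈ γ ∧ q ∈ γ).card).sum :=
        sum_map_le_of_forall_le_add hcurve
    _ = Γ.card * d + ∑ _ ∈ F, codegree Γ p q := by
      rw [sum_map_card_filter Γ F fun γ _ ↦ p ∈ γ ∧ q ∈ γ]
      rfl
    _ ≤ Γ.card * (d + 1) + F.card * mu := by
      rw [Finset.sum_const, smul_eq_mul]
      gcongr
      · exact Nat.le_succ d
      · exact hF hp hq hne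

lemma incidences_le_of_fibers {f : ℂ × ℂ → ℂ} (hf : ∀ p ∈ S, f p ∈ A)
    (hS : (S : Set (ℂ × ℂ)).Pairwise fun p q ↦ codegree Γ p q ≤ mu)
    (hΓ : ∀ γ ∈ Γ, ∀ a, (∀ p, f p = a → p ∈ γ) ∨ {p ∈ S | f p = a ∧ p ∈ γ}.card ≤ d) :
    incidences S Γ ≤ A.card * (Γ.card * (d + 1)) + S.card * mu := by
  have hfiber : ∀ a ∈ A, incidences {p ∈ S | f p = a} Γ ≤
      Γ.card * (d + 1) + {p ∈ S | f p = a}.card * mu := by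
    refine fun a _ ↦ incidences_le_of_subset_or_card_le
      (hS.mono (Finset.filter_subset _ _)) fun γ hγ ↦ (hΓ γ hγ a).imp (fun h p hp ↦ ?_) fun h ↦ ?_
    · exact h p (Finset.mem_filter.1 hp).2
    · rwa [Finset.filter_filter]
  calc incidences S Γ ≤ ∑ a ∈ A, (Γ.card * (d + 1) + {p ∈ S | f p = a}.card * mu) :=
        (incidences_eq_sum_fiberwise hf).trans_le (Finset.sum_le_sum hfiber)
    _ = A.card * (Γ.card * (d + 1)) + S.card * mu := by
      rw [Finset.sum_add_distrib, Finset.sum_const, smul_eq_mul, ← Finset.sum_mul,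
        ← Finset.card_eq_sum_card_fiberwise hf]

end Incidences

section Curves

open Polynomial.Bivariate (swap)
open scoped Polynomial Polynomial.Bivariate

variable {A B : Finset ℂ} {S : Finset (ℂ × ℂ)} {Γ : Multiset (Set (ℂ × ℂ))} {γ : Set (ℂ × ℂ)}
  {d mu : ℕ}

/-- `γ` is the zero set of a nonzero polynomial of degree at most `d` in each variable. -/
def IsCurve (d : ℕ) (γ : Set (ℂ × ℂ)) : Prop :=
  ∃ P : ℂ[X][Y], P ≠ 0 ∧ P ∈ bidegreeLE ℂ d ∧ ∀ p : ℂ × ℂ, p ∈ γ ↔ P.evalEval p.1 p.2 = 0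

lemma equivMvPolynomial_symm_mem_bidegreeLE {R : Type*} [CommRing R] {g : MvPolynomial (Fin 2) R}
    (hg : g.totalDegree ≤ d) :
    (Polynomial.Bivariate.equivMvPolynomial R).symm g ∈ bidegreeLE R d := by
  rw [g.as_sum, map_sum]
  refine Submodule.sum_mem _ fun m hm ↦ ?_
  have hdeg : m 0 + m 1 ≤ d := by
    have := (MvPolynomial.le_totalDegree hm).trans hg
    rwa [Finsupp.sum_fintype _ _ fun _ ↦ rfl, Fin.sum_univ_two] at this
  rw [MvPolynomial.monomial_eq, Finsupp.prod_fintype _ _ fun _ ↦ pow_zero _, Fin.prod_univ_two]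
  simp only [map_mul, map_pow, Polynomial.Bivariate.equivMvPolynomial_symm_C,
    Polynomial.Bivariate.equivMvPolynomial_symm_X_0,
    Polynomial.Bivariate.equivMvPolynomial_symm_X_1]
  rw [← mul_assoc, ← Polynomial.C_pow, ← Polynomial.C_mul, Polynomial.C_mul_X_pow_eq_monomial,
    Polynomial.C_mul_X_pow_eq_monomial]
  exact monomial_monomial_mem_bidegreeLE (by omega) (by omega) _

lemma evalEval_equivMvPolynomial_symm {R : Type*} [CommRing R] (g : MvPolynomial (Fin 2) R)
    (x y : R) :
    ((Polynomial.Bivariate.equivMvPolynomial R).symm g).evalEval x y = eval ![x, y] g := by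
  induction g using MvPolynomial.induction_on with
  | C a => simp
  | add p q hp hq => rw [map_add, Polynomial.evalEval_add, hp, hq, map_add]
  | mul_X p i hp =>
    rw [map_mul, Polynomial.evalEval_mul, hp, map_mul]
    fin_cases i <;> simp [Polynomial.evalEval]

lemma isCurve_of_totalDegree_le {g : MvPolynomial (Fin 2) ℂ} (hg : g ≠ 0)
    (hd : g.totalDegree ≤ d) : IsCurve d {p | ev2 g p = 0} :=
  ⟨(Polynomial.Bivariate.equivMvPolynomial ℂ).symm g,
    (map_ne_zero_iff _ (Polynomial.Bivariate.equivMvPolynomial ℂ).symm.injective).2 hg,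
    equivMvPolynomial_symm_mem_bidegreeLE hd,
    fun p ↦ by rw [evalEval_equivMvPolynomial_symm]; rfl⟩

lemma IsCurve.preimage_swap (h : IsCurve d γ) : IsCurve d (Prod.swap ⁻¹' γ) := by
  obtain ⟨P, hP₀, hP, hPγ⟩ := h
  exact ⟨swap P, (map_ne_zero_iff _ (swap (R := ℂ)).injective).2 hP₀, swap_mem_bidegreeLE hP,
    fun p ↦ by rw [evalEval_swap]; exact hPγ _⟩

lemma IsCurve.vertical (h : IsCurve d γ) (S : Finset (ℂ × ℂ)) (a : ℂ) :
    (∀ p : ℂ × ℂ, p.1 = a → p ∈ γ) ∨ {p ∈ S | p.1 = a ∧ p ∈ γ}.card ≤ d := by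
  obtain ⟨P, -, hP, hPγ⟩ := h
  set R := P.map (Polynomial.evalRingHom a)
  have hR : ∀ p ∈ γ, p.1 = a → R.eval p.2 = 0 := by
    rintro p hp rfl
    rwa [Polynomial.map_evalRingHom_eval, ← hPγ]
  rcases eq_or_ne R 0 with h₀ | h₀
  · refine .inl ?_
    rintro p rfl
    rw [hPγ, ← Polynomial.map_evalRingHom_eval, show P.map _ = 0 from h₀, Polynomial.eval_zero]
  refine .inr (le_trans (b := R.roots.toFinset.card) ?_ <| R.roots.toFinset_card_le.trans <|
    R.card_roots'.trans <| Polynomial.natDegree_map_le.trans (mem_bidegreeLE.1 hP).1)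
  refine Finset.card_le_card_of_injOn Prod.snd (fun p hp ↦ ?_) fun p hp q hq hpq ↦ ?_
  · obtain ⟨-, hpa, hpγ⟩ := Finset.mem_filter.1 hp
    exact Multiset.mem_toFinset.2 ((Polynomial.mem_roots h₀).2 (hR p hpγ hpa))
  · exact Prod.ext ((Finset.mem_filter.1 hp).2.1.trans (Finset.mem_filter.1 hq).2.1.symm) hpq

lemma IsCurve.horizontal (h : IsCurve d γ) (S : Finset (ℂ × ℂ)) (a : ℂ) :
    (∀ p : ℂ × ℂ, p.2 = a → p ∈ γ) ∨ {p ∈ S | p.2 = a ∧ p ∈ γ}.card ≤ d := by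
  refine (h.preimage_swap.vertical (S.image Prod.swap) a).imp (fun h p ↦ h p.swap) fun h ↦ ?_
  refine (Finset.card_le_card_of_injOn Prod.swap (fun p hp ↦ ?_)
    Prod.swap_injective.injOn).trans h
  obtain ⟨hpS, hp⟩ := Finset.mem_filter.1 hp
  exact Finset.mem_filter.2 ⟨Finset.mem_image_of_mem _ hpS, hp⟩

lemma card_filter_and_le_mul (hS : S ⊆ A ×ˢ B) (E F : ℂ → ℂ → Prop) :
    {x ∈ S ×ˢ S | E x.1.1 x.2.1 ∧ F x.1.2 x.2.2}.card ≤
      {x ∈ A ×ˢ A | E x.1 x.2}.card * {x ∈ B ×ˢ B | F x.1 x.2}.card := by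
  rw [← Finset.card_product]
  refine Finset.card_le_card_of_injOn (fun x ↦ ((x.1.1, x.2.1), (x.1.2, x.2.2)))
    (fun x hx ↦ ?_) fun x _ y _ hxy ↦ ?_
  · obtain ⟨hx, hE, hF⟩ := Finset.mem_filter.1 hx
    obtain ⟨hpA, hpB⟩ := Finset.mem_product.1 (hS (Finset.mem_product.1 hx).1)
    obtain ⟨hqA, hqB⟩ := Finset.mem_product.1 (hS (Finset.mem_product.1 hx).2)
    exact Finset.mk_mem_product (Finset.mem_filter.2 ⟨Finset.mk_mem_product hpA hqA, hE⟩)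
      (Finset.mem_filter.2 ⟨Finset.mk_mem_product hpB hqB, hF⟩)
  · simp only [Prod.mk.injEq] at hxy
    exact Prod.ext (Prod.ext hxy.1.1 hxy.2.1) (Prod.ext hxy.1.2 hxy.2.2)

lemma exists_incidences_le_of_sparse (d mu : ℕ) : ∃ N M : ℕ, ∀ {A B : Finset ℂ} {C : Cells A}
    {D : Cells B} {S : Finset (ℂ × ℂ)} {Γ : Multiset (Set (ℂ × ℂ))} {T U : ℕ},
    C.Sparse T → D.Sparse U → S ⊆ A ×ˢ B → (∀ γ ∈ Γ, IsCurve d γ) →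
    (S : Set (ℂ × ℂ)).Pairwise (fun p q ↦ codegree Γ p q ≤ mu) →
    incidences S Γ ≤ Γ.card * (N * (C.card + D.card)) + M * (T * A.card * (U * B.card)) := by
  obtain ⟨K, N, hN⟩ := card_le_of_cellSeparated d
  obtain ⟨G, hG⟩ := Cells.exists_card_close_pairs_le K
  refine ⟨N, G * G * mu, fun {A B C D S Γ T U} hC hD hS hΓ hmu ↦ ?_⟩
  set E : ℂ → ℂ → Prop := fun a b ↦ ‖a - b‖ ≤ K * min (C.scale a) (C.scale b)
  set F : ℂ → ℂ → Prop := fun a b ↦ ‖a - b‖ ≤ K * min (D.scale a) (D.scale b)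
  have hcurve : ∀ γ ∈ Γ, ∀ Q ⊆ S, (∀ p ∈ Q, p ∈ γ) →
      (∀ p ∈ Q, ∀ q ∈ Q, p ≠ q → ¬ (E p.1 q.1 ∧ F p.2 q.2)) → Q.card ≤ N * (C.card + D.card) := by
    intro γ hγ Q hQ hQγ hQE
    obtain ⟨P, hP₀, hP, hPγ⟩ := hΓ γ hγ
    refine hN hP₀ hP ⟨hQ.trans hS, fun p hp q hq hne ↦ ?_⟩ fun p hp ↦ (hPγ p).1 (hQγ p hp)
    exact (not_and_or.1 (hQE p hp q hq hne)).imp not_le.1 not_le.1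
  calc incidences S Γ
      ≤ Γ.card * (N * (C.card + D.card)) +
          {x ∈ S ×ˢ S | E x.1.1 x.2.1 ∧ F x.1.2 x.2.2}.card * mu :=
        incidences_le_of_independent (fun p q ↦ E p.1 q.1 ∧ F p.2 q.2) hmu hcurve
    _ ≤ Γ.card * (N * (C.card + D.card)) + G * T * A.card * (G * U * B.card) * mu := by
      gcongr
      exact (card_filter_and_le_mul hS E F).trans (Nat.mul_le_mul (hG hC) (hG hD))
    _ = _ := by ring

end Curves

section Bound

variable {A B : Finset ℂ} {S : Finset (ℂ × ℂ)} {Γ : Multiset (Set (ℂ × ℂ))} {d mu : ℕ} {κ : ℝ}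

lemma exists_nat_mul_le {a : ℕ} (hκ : 1 ≤ κ) (ha : 2 * κ ≤ a) :
    ∃ T : ℕ, 2 ≤ T ∧ T * κ ≤ a ∧ ∀ n : ℕ, n * T ≤ a + T → (n : ℝ) ≤ 3 * κ := by
  have hκ₀ : 0 < κ := by linarith
  have hfloor : 2 ≤ ⌊a / κ⌋₊ := Nat.le_floor (by rw [le_div_iff₀ hκ₀]; exact_mod_cast ha)
  refine ⟨⌊a / κ⌋₊, hfloor, ?_, fun n hn ↦ ?_⟩
  · rw [← le_div_iff₀ hκ₀]
    exact Nat.floor_le (by positivity)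
  have hlt := Nat.lt_floor_add_one (a / κ)
  rw [div_lt_iff₀ hκ₀] at hlt
  have hT : (2 : ℝ) ≤ ⌊a / κ⌋₊ := by exact_mod_cast hfloor
  have hn' : (n : ℝ) * ⌊a / κ⌋₊ ≤ a + ⌊a / κ⌋₊ := by exact_mod_cast hn
  set T : ℝ := (⌊a / κ⌋₊ : ℝ)
  refine le_of_mul_le_mul_right ?_ (by linarith : 0 < T)
  nlinarith

lemma exists_incidences_le_of_two_mul_le_card (d mu : ℕ) : ∃ c : ℝ, 0 ≤ c ∧ ∀ {A B : Finset ℂ}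
    {S : Finset (ℂ × ℂ)} {Γ : Multiset (Set (ℂ × ℂ))} {κ : ℝ}, S ⊆ A ×ˢ B →
    (∀ γ ∈ Γ, IsCurve d γ) → (S : Set (ℂ × ℂ)).Pairwise (fun p q ↦ codegree Γ p q ≤ mu) →
    1 ≤ κ → 2 * κ ≤ A.card → 2 * κ ≤ B.card → κ ^ 3 * Γ.card = (A.card * B.card : ℝ) ^ 2 →
    (incidences S Γ : ℝ) ≤ c * (κ * Γ.card) := by
  obtain ⟨N, M, hNM⟩ := exists_incidences_le_of_sparse d mu
  refine ⟨N * 6 + M, by positivity, fun {A B S Γ κ} hS hΓ hmu hκ hA hB hκ3 ↦ ?_⟩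
  obtain ⟨T, hT, hTA, hnT⟩ := exists_nat_mul_le hκ hA
  obtain ⟨U, hU, hUB, hnU⟩ := exists_nat_mul_le hκ hB
  obtain ⟨C, hC, hCT⟩ := Cells.exists_sparse hT A
  obtain ⟨D, hD, hDU⟩ := Cells.exists_sparse hU B
  have hpairs : (T * A.card * (U * B.card) : ℝ) ≤ κ * Γ.card := by
    have hκ2 : 0 < κ ^ 2 := by positivity
    refine le_of_mul_le_mul_right ?_ hκ2
    calc (T * A.card * (U * B.card) * κ ^ 2 : ℝ) = T * κ * (U * κ) * (A.card * B.card) := by ring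
      _ ≤ A.card * B.card * (A.card * B.card) := by gcongr
      _ = κ ^ 3 * Γ.card := by rw [hκ3]; ring
      _ = κ * Γ.card * κ ^ 2 := by ring
  calc (incidences S Γ : ℝ)
      ≤ Γ.card * (N * (C.card + D.card)) + M * (T * A.card * (U * B.card)) :=
        mod_cast hNM hCT hDU hS hΓ hmu
    _ ≤ Γ.card * (N * (3 * κ + 3 * κ)) + M * (κ * Γ.card) := by
      have := hnT _ hC
      have := hnU _ hD
      gcongr
    _ = _ := by ring

lemma incidences_le_of_card_le_two_mul {f : ℂ × ℂ → ℂ} (hf : ∀ p ∈ S, f p ∈ A)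
    (hmu : (S : Set (ℂ × ℂ)).Pairwise fun p q ↦ codegree Γ p q ≤ mu)
    (hΓ : ∀ γ ∈ Γ, ∀ a, (∀ p, f p = a → p ∈ γ) ∨ {p ∈ S | f p = a ∧ p ∈ γ}.card ≤ d)
    (hκ : A.card ≤ 2 * κ) :
    (incidences S Γ : ℝ) ≤ 2 * (d + 1) * (κ * Γ.card) + mu * S.card := by
  calc (incidences S Γ : ℝ) ≤ A.card * (Γ.card * (d + 1)) + S.card * mu :=
        mod_cast incidences_le_of_fibers hf hmu hΓ
    _ ≤ 2 * κ * (Γ.card * (d + 1)) + S.card * mu := by gcongr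
    _ = _ := by ring

lemma incidences_le_of_le_one (hS : (S.card : ℝ) ≤ A.card * B.card)
    (hmu : (S : Set (ℂ × ℂ)).Pairwise fun p q ↦ codegree Γ p q ≤ mu) (hκ₀ : 0 ≤ κ) (hκ : κ ≤ 1)
    (hκ3 : κ ^ 3 * Γ.card = (A.card * B.card : ℝ) ^ 2) :
    (incidences S Γ : ℝ) ≤ (1 + mu) * Γ.card := by
  calc (incidences S Γ : ℝ) ≤ Γ.card + (S.card : ℝ) ^ 2 * mu :=
        mod_cast incidences_le_card_add_sq hmu
    _ ≤ Γ.card + (A.card * B.card : ℝ) ^ 2 * mu := by gcongr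
    _ = Γ.card + κ ^ 3 * Γ.card * mu := by rw [hκ3]
    _ ≤ Γ.card + 1 * Γ.card * mu := by
      gcongr
      exact pow_le_one₀ hκ₀ hκ
    _ = _ := by ring

lemma exists_incidences_le_of_pow_three_mul_eq (d mu : ℕ) : ∃ c : ℝ, 0 < c ∧
    ∀ {A B : Finset ℂ} {S : Finset (ℂ × ℂ)} {Γ : Multiset (Set (ℂ × ℂ))} {κ : ℝ}, S ⊆ A ×ˢ B →
    (∀ γ ∈ Γ, IsCurve d γ) → (S : Set (ℂ × ℂ)).Pairwise (fun p q ↦ codegree Γ p q ≤ mu) →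
    0 ≤ κ → κ ^ 3 * Γ.card = (A.card * B.card : ℝ) ^ 2 →
    (incidences S Γ : ℝ) ≤ c * (κ * Γ.card + A.card * B.card + Γ.card) := by
  obtain ⟨c, hc, h⟩ := exists_incidences_le_of_two_mul_le_card d mu
  refine ⟨c + 2 * (d + 1) + mu, by positivity, fun {A B S Γ κ} hS hΓ hmu hκ₀ hκ3 ↦ ?_⟩
  have hcard : (S.card : ℝ) ≤ A.card * B.card :=
    mod_cast (Finset.card_le_card hS).trans_eq (Finset.card_product A B)
  have hcombine : ∀ x y z : ℝ, x ≤ c + 2 * (d + 1) + mu → y ≤ c + 2 * (d + 1) + mu →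
      z ≤ c + 2 * (d + 1) + mu → x * (κ * Γ.card) + y * (A.card * B.card) + z * Γ.card ≤
        (c + 2 * (d + 1) + mu) * (κ * Γ.card + A.card * B.card + Γ.card) := by
    intro x y z hx hy hz
    rw [mul_add, mul_add]
    gcongr
  have : (0 : ℝ) ≤ d := d.cast_nonneg
  have : (0 : ℝ) ≤ mu := mu.cast_nonneg
  have hmuS : (mu * S.card : ℝ) ≤ mu * (A.card * B.card) := by gcongr
  rcases le_total κ 1 with hκ | hκ
  · have := incidences_le_of_le_one hcard hmu hκ₀ hκ hκ3
    linarith [hcombine 0 0 (1 + mu) (by linarith) (by linarith) (by linarith)]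
  rcases le_total (A.card : ℝ) (2 * κ) with hA | hA
  · have := incidences_le_of_card_le_two_mul (fun p hp ↦ (Finset.mem_product.1 (hS hp)).1) hmu
      (fun γ hγ ↦ (hΓ γ hγ).vertical S) hA
    linarith [hcombine (2 * (d + 1)) mu 0 (by linarith) (by linarith) (by linarith)]
  rcases le_total (B.card : ℝ) (2 * κ) with hB | hB
  · have := incidences_le_of_card_le_two_mul (fun p hp ↦ (Finset.mem_product.1 (hS hp)).2) hmu
      (fun γ hγ ↦ (hΓ γ hγ).horizontal S) hB
    linarith [hcombine (2 * (d + 1)) mu 0 (by linarith) (by linarith) (by linarith)]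
  · have := h hS hΓ hmu hκ hA hB hκ3
    linarith [hcombine c 0 0 (by linarith) (by linarith) (by linarith)]

lemma rpow_two_thirds_pow_three {x : ℝ} (hx : 0 ≤ x) : (x ^ ((2 : ℝ) / 3)) ^ 3 = x ^ 2 := by
  rw [← Real.rpow_mul_natCast hx, ← Real.rpow_natCast x 2]
  norm_num

lemma exists_incidences_le_of_pairwise (d mu : ℕ) : ∃ c : ℝ, 0 < c ∧
    ∀ {A B : Finset ℂ} {S : Finset (ℂ × ℂ)} {Γ : Multiset (Set (ℂ × ℂ))}, S ⊆ A ×ˢ B →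
    (∀ γ ∈ Γ, IsCurve d γ) → (S : Set (ℂ × ℂ)).Pairwise (fun p q ↦ codegree Γ p q ≤ mu) →
    (incidences S Γ : ℝ) ≤ c * ((A.card : ℝ) ^ ((2 : ℝ) / 3) * (B.card : ℝ) ^ ((2 : ℝ) / 3) *
      (Γ.card : ℝ) ^ ((2 : ℝ) / 3) + A.card * B.card + Γ.card) := by
  obtain ⟨c, hc, h⟩ := exists_incidences_le_of_pow_three_mul_eq d mu
  refine ⟨c, hc, fun {A B S Γ} hS hΓ hmu ↦ ?_⟩
  rcases eq_or_ne Γ 0 with rfl | hΓ₀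
  · rw [show incidences S 0 = 0 from rfl, Nat.cast_zero]
    positivity
  have hm : (Γ.card : ℝ) ≠ 0 := Nat.cast_ne_zero.2 (Multiset.card_pos.2 hΓ₀).ne'
  set X : ℝ := (A.card : ℝ) ^ ((2 : ℝ) / 3) * (B.card : ℝ) ^ ((2 : ℝ) / 3) *
    (Γ.card : ℝ) ^ ((2 : ℝ) / 3) with hX
  have hX3 : X ^ 3 = (A.card * B.card : ℝ) ^ 2 * Γ.card ^ 2 := by
    simp only [hX, mul_pow, rpow_two_thirds_pow_three (Nat.cast_nonneg _)]
  have hκ := h hS hΓ hmu (κ := X / Γ.card) (by positivity) (by rw [div_pow, hX3]; field_simp)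
  rwa [div_mul_cancel₀ _ hm] at hκ

end Bound

theorem incidence_bound_general (d lam mu : ℕ) :
    ∃ c : ℝ, 0 < c ∧
    ∀ (A B : Finset ℂ) (S : Finset (ℂ × ℂ)) (Γ : Multiset (Set (ℂ × ℂ))),
      S ⊆ A ×ˢ B → (∀ γ ∈ Γ, IsCurve d γ) →
      (∀ p ∈ S, {q ∈ S.erase p | mu < codegree Γ p q}.card ≤ lam) →
      (incidences S Γ : ℝ) ≤ c * ((A.card : ℝ) ^ ((2 : ℝ) / 3) * (B.card : ℝ) ^ ((2 : ℝ) / 3) *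
        (Γ.card : ℝ) ^ ((2 : ℝ) / 3) + A.card * B.card + Γ.card) := by
  obtain ⟨c, hc, h⟩ := exists_incidences_le_of_pairwise d mu
  refine ⟨(lam + 1) * c, by positivity, fun A B S Γ hS hΓ hmult ↦ ?_⟩
  obtain ⟨f, hf⟩ := exists_coloring_of_degree_le (E := fun p q ↦ mu < codegree Γ p q)
    (fun p q hpq ↦ hpq.trans_eq (codegree_comm p q)) hmult
  set R : ℝ := (A.card : ℝ) ^ ((2 : ℝ) / 3) * (B.card : ℝ) ^ ((2 : ℝ) / 3) *
    (Γ.card : ℝ) ^ ((2 : ℝ) / 3) + A.card * B.card + Γ.card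
  have hclass : ∀ i ∈ Finset.univ, (incidences {p ∈ S | f p = i} Γ : ℝ) ≤ c * R := by
    refine fun i _ ↦ h ((Finset.filter_subset _ _).trans hS) hΓ fun p hp q hq hne ↦ ?_
    obtain ⟨hp, hpi⟩ := Finset.mem_filter.1 hp
    obtain ⟨hq, hqi⟩ := Finset.mem_filter.1 hq
    exact not_lt.1 (hf p hp q hq hne (hpi.trans hqi.symm))
  calc (incidences S Γ : ℝ) = ∑ i, (incidences {p ∈ S | f p = i} Γ : ℝ) := by
        rw [incidences_eq_sum_fiberwise fun p _ ↦ Finset.mem_univ (f p), Nat.cast_sum]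
    _ ≤ (Finset.univ : Finset (Fin (lam + 1))).card • (c * R) :=
      Finset.sum_le_card_nsmul _ _ _ hclass
    _ = (lam + 1) * c * R := by
      rw [Finset.card_univ, Fintype.card_fin, nsmul_eq_mul, Nat.cast_succ, mul_assoc]

/-- **Proposition 2.6** (incidence bound, after Solymosi–De Zeeuw). If `Π ⊆ A₁×A₂` and `Γ`
is a finite multiset of plane algebraic curves of degree at most `δ` such that `(Π,Γ)` has
`(λ,μ)`-bounded multiplicity, then
`I(Π,Γ) ≤ c·(|A₁|^{2/3}|A₂|^{2/3}|Γ|^{2/3} + |A₁||A₂| + |Γ|)`,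
with `c` depending only (polynomially) on `δ`, `λ`, `μ`. -/
theorem incidence_bound (δ lam mu : ℕ) :
    ∃ c : ℝ, 0 < c ∧
    ∀ (A₁ A₂ : Finset ℂ) (Pi : Finset (ℂ × ℂ)) (Γ : Multiset (Set (ℂ × ℂ))),
      Pi ⊆ A₁ ×ˢ A₂ →
      (∀ γ ∈ Γ, ∃ g : MvPolynomial (Fin 2) ℂ, g ≠ 0 ∧ g.totalDegree ≤ δ ∧
        γ = {p : ℂ × ℂ | ev2 g p = 0}) →
      BddMult Pi Γ lam mu →
      (incidences Pi Γ : ℝ) ≤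
        c * ((A₁.card : ℝ) ^ ((2:ℝ)/3) * (A₂.card : ℝ) ^ ((2:ℝ)/3) *
              (Multiset.card Γ : ℝ) ^ ((2:ℝ)/3)
            + (A₁.card : ℝ) * A₂.card + (Multiset.card Γ : ℝ)) :=
  let ⟨c, hc, h⟩ := incidence_bound_general δ lam mu
  ⟨c, hc, fun A₁ A₂ Pi Γ hPi hΓ hmult ↦ h A₁ A₂ Pi Γ hPi
    (fun γ hγ ↦ let ⟨_, hg, hd, hγg⟩ := hΓ γ hγ; hγg ▸ isCurve_of_totalDegree_le hg hd) hmult.2⟩
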